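/- Assume d ≥ 2, 2 < p < 2_s^⋆, and let (g_ε) be (s,γ)-admissible for some s > d/(d+1) and γ > 1. Set α_rad := 2d(1/2 − 1/p). Then there exist constants 0 < c' ≤ C' < ∞ and ε₀ ∈ (0,1), depending only on d, p, s, γ and the admissibility constants, such that for all ε ∈ (0, ε₀): if p ≠ 2d/(d−1) then c' ε^{1 − min(1,α_rad)/γ} ≤ R^rad_ε(p) ≤ C' ε^{1 − min(1,α_rad)/γ}, while if p = 2d/(d−1) then c' ε^{1 − 1/γ} |log ε|^{(1−d)/d} ≤ R^rad_ε(p) ≤ C' ε^{1 − 1/γ} |log ε|^{(1−d)/d}. -/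

import Mathlib

open MeasureTheory Real Filter
open scoped ENNReal FourierTransform RealInnerProductSpace Topology

noncomputable section

/-- Euclidean space `ℝ^d`. -/
abbrev Rd (d : ℕ) : Type := EuclideanSpace ℝ (Fin d)

/-- `U` is the (distributional, hence `L²`-) Fourier transform of `u`:
it pairs against Schwartz functions the way the Fourier transform of `u` must. -/
def IsFT {d : ℕ} (U u : Rd d → ℂ) : Prop :=
  ∀ φ : SchwartzMap (Rd d) ℂ, ∫ ξ, U ξ * φ ξ = ∫ x, u x * 𝓕 (⇑φ) x

/-- An element of `H^s(ℝ^d)`: an `L²` function `toFun` together with its Fourier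
transform `ft`, satisfying the `H^s` integrability condition. -/
structure HsFn (d : ℕ) (s : ℝ) where
  toFun : Rd d → ℂ
  ft : Rd d → ℂ
  memL2 : MemLp toFun 2 volume
  ft_memL2 : MemLp ft 2 volume
  isFT : IsFT ft toFun
  memHs : Integrable (fun ξ : Rd d => ‖ft ξ‖ ^ 2 * (1 + ‖ξ‖ ^ 2) ^ s) volume

/-- The quadratic form `q_ε(u) = ∫ |û(ξ)|² g(|ξ|) dξ` (for a fixed symbol `g`). -/
def qeps {d : ℕ} {s : ℝ} (g : ℝ → ℝ) (u : HsFn d s) : ℝ :=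
  ∫ ξ : Rd d, ‖u.ft ξ‖ ^ 2 * g ‖ξ‖

/-- The `L^p` norm (as a real number). -/
def LpN {d : ℕ} (p : ℝ) (f : Rd d → ℂ) : ℝ :=
  (eLpNorm f (ENNReal.ofReal p) volume).toReal

/-- The set of values of the Rayleigh quotient `q_ε(u)/‖u‖_p²` over nonzero
`u ∈ H^s` satisfying the symmetry constraint `P`. -/
def RayleighSet (d : ℕ) (s p : ℝ) (g : ℝ → ℝ) (P : (Rd d → ℂ) → Prop) : Set ℝ :=
  {t | ∃ u : HsFn d s, P u.toFun ∧ ¬ u.toFun =ᵐ[volume] (fun _ => (0 : ℂ)) ∧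
      MemLp u.toFun (ENNReal.ofReal p) volume ∧
      t = qeps g u / LpN p u.toFun ^ 2}

/-- The Rayleigh quotient infimum. -/
def Rayleigh (d : ℕ) (s p : ℝ) (g : ℝ → ℝ) (P : (Rd d → ℂ) → Prop) : ℝ :=
  sInf (RayleighSet d s p g P)

/-- The Rayleigh quotient infimum is attained. -/
def Attained (d : ℕ) (s p : ℝ) (g : ℝ → ℝ) (P : (Rd d → ℂ) → Prop) : Prop :=
  ∃ u : HsFn d s, P u.toFun ∧ ¬ u.toFun =ᵐ[volume] (fun _ => (0 : ℂ)) ∧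
      MemLp u.toFun (ENNReal.ofReal p) volume ∧
      qeps g u / LpN p u.toFun ^ 2 = Rayleigh d s p g P

/-- A radial function. -/
def Radial {d : ℕ} (f : Rd d → ℂ) : Prop := ∀ x y : Rd d, ‖x‖ = ‖y‖ → f x = f y

/-- The squared norm of the first block of coordinates (the first `d - k` ones),
under the identification `ℝ^d = ℝ^{d-k} × ℝ^k`. -/
def blockSq (d k : ℕ) (x : Rd d) : ℝ := ∑ i : Fin d, if (i : ℕ) < d - k then x i ^ 2 else 0

/-- A `G_k = O(d-k) × O(k)`-symmetric function: it depends only on the norms of the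
two blocks of coordinates. -/
def GkSymmetric (d k : ℕ) (f : Rd d → ℂ) : Prop :=
  ∀ x y : Rd d, blockSq d k x = blockSq d k y → ‖x‖ = ‖y‖ → f x = f y

/-- An `(s,γ)`-admissible family of symbols, with admissibility constants `c, C`. -/
def IsAdmissible (s γ c C : ℝ) (g : ℝ → ℝ → ℝ) : Prop :=
  (∀ ε ∈ Set.Ioo (0:ℝ) 1, Measurable (g ε)) ∧
  (∀ ε ∈ Set.Ioo (0:ℝ) 1, ∀ r : ℝ, 0 < g ε r) ∧
  (∀ ε ∈ Set.Ioo (0:ℝ) 1, ∀ r : ℝ, 1/2 ≤ |r - 1| →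
      c * (1 + |r| ^ (2*s)) ≤ g ε r ∧ g ε r ≤ C * (1 + |r| ^ (2*s))) ∧
  (∀ ε ∈ Set.Ioo (0:ℝ) 1, ∀ r : ℝ, |r - 1| ≤ 1/2 →
      c * (ε + |r - 1| ^ γ) ≤ g ε r ∧ g ε r ≤ C * (ε + |r - 1| ^ γ))

/-- The `G_k`-symmetric Stein–Tomas exponent `2_⋆^k`. -/
def twoStarK (d k : ℕ) : ℝ :=
  2 * ((d : ℝ) + (min k (d - k) : ℕ)) / ((d : ℝ) - 2 + (min k (d - k) : ℕ))

/-- The interpolation parameter `α_k`. -/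
def alphaK (d k : ℕ) (p : ℝ) : ℝ := (1/2 - 1/p) / (1/2 - 1/twoStarK d k)

/-- The spherical shell `A_{ε,δ}` around the unit sphere (with `I_{ε,δ}` scale `ε^{1/γ}`). -/
def Aset (d : ℕ) (γ ε δ : ℝ) : Set (Rd d) :=
  {ξ | δ * ε ^ (1/γ) ≤ |‖ξ‖ - 1| ∧ |‖ξ‖ - 1| ≤ δ⁻¹ * ε ^ (1/γ)}


lemma ae_eq_of_schwartz {d : ℕ} {v w : Rd d → ℂ} (hv : LocallyIntegrable v) (hw : LocallyIntegrable w)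
    (h : ∀ φ : SchwartzMap (Rd d) ℂ, ∫ x, v x * φ x = ∫ x, w x * φ x) : v =ᵐ[volume] w := by
  refine ae_eq_of_integral_contDiff_smul_eq hv hw (fun g hg hgc => ?_)
  have hgc' : HasCompactSupport (fun x => (g x : ℂ)) := hgc.comp_left (g := Complex.ofReal) (by simp)
  have h' := h (hgc'.toSchwartzMap (Complex.ofRealCLM.contDiff.comp hg))
  have e : ∀ x, (hgc'.toSchwartzMap (Complex.ofRealCLM.contDiff.comp hg)) x = (g x : ℂ) := fun x => rfl
  simp only [e] at h'
  simpa [mul_comm] using h'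

lemma memLp_locInt {d : ℕ} {v : Rd d → ℂ} (hv : MemLp v 2 volume) : LocallyIntegrable v :=
  hv.locallyIntegrable (by norm_num)

lemma int_schwartz {d : ℕ} {v : Rd d → ℂ} (hv : MemLp v 2 volume) (φ : SchwartzMap (Rd d) ℂ) :
    Integrable (fun x => v x * φ x) := by
  have := (φ.memLp 2 volume)
  exact hv.integrable_mul this

/-- inverse Fourier transform of an `L²` class -/
lemma isFT_lp {d : ℕ} {V : Rd d → ℂ} (hV : MemLp V 2 volume) :
    IsFT V (𝓕⁻ (hV.toLp V) : Lp ℂ 2 (volume : Measure (Rd d))) := by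
  intro φ
  have h := Lp.fourierInv_toTemperedDistribution_eq (hV.toLp V)
  have h2 := congrArg (fun T => T (𝓕 φ)) h
  simp only [TemperedDistribution.fourierInv_apply, Lp.toTemperedDistribution_apply] at h2
  simp only [FourierTransform.fourierInv_fourier_eq, smul_eq_mul] at h2
  have h3 : ∫ ξ, V ξ * φ ξ = ∫ x, φ x * (hV.toLp V) x := by
    apply integral_congr_ae
    filter_upwards [hV.coeFn_toLp] with x hx
    rw [hx, mul_comm]
  rw [h3, h2]
  apply integral_congr_ae
  filter_upwards with x
  rw [mul_comm]; rfl

lemma isFT_unique {d : ℕ} {V v w : Rd d → ℂ} (hv : LocallyIntegrable v) (hw : LocallyIntegrable w)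
    (h1 : IsFT V v) (h2 : IsFT V w) : v =ᵐ[volume] w := by
  refine ae_eq_of_schwartz hv hw (fun φ => ?_)
  have e : (𝓕 (⇑(𝓕⁻ φ : SchwartzMap (Rd d) ℂ)) : Rd d → ℂ) = φ := by
    have : 𝓕 (𝓕⁻ φ) = φ := FourierTransform.fourier_fourierInv_eq φ
    conv_rhs => rw [← this]
    rfl
  have a := h1 (𝓕⁻ φ)
  have b := h2 (𝓕⁻ φ)
  rw [e] at a b
  rw [← a, ← b]

/-- Plancherel. -/
lemma plancherel {d : ℕ} {U u : Rd d → ℂ} (hU : MemLp U 2 volume) (hu : MemLp u 2 volume)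
    (h : IsFT U u) : eLpNorm u 2 volume = eLpNorm U 2 volume := by
  have h1 := isFT_lp hU
  have h2 := isFT_unique (memLp_locInt hu) (memLp_locInt (Lp.memLp _)) h h1
  rw [eLpNorm_congr_ae h2]
  have h3 : ‖(𝓕⁻ (hU.toLp U) : Lp ℂ 2 (volume : Measure (Rd d)))‖ = ‖hU.toLp U‖ := by
    rw [← Lp.norm_fourier_eq, FourierTransform.fourier_fourierInv_eq]
  rw [Lp.norm_def, Lp.norm_def, ENNReal.toReal_eq_toReal_iff' (Lp.eLpNorm_ne_top _) (Lp.eLpNorm_ne_top _)] at h3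
  rw [h3, eLpNorm_congr_ae hU.coeFn_toLp]

lemma fourierInv_def' {d : ℕ} (V : Rd d → ℂ) (x : Rd d) :
    𝓕⁻ V x = ∫ ξ, Complex.exp (↑(2 * π * inner ℝ ξ x) * Complex.I) * V ξ := by
  rw [Real.fourierInv_eq']
  simp

lemma isFT_inv {d : ℕ} {V : Rd d → ℂ} (hV : Integrable V) : IsFT V (𝓕⁻ V) := by
  intro φ
  have key := VectorFourier.integral_fourierIntegral_smul_eq_flip (L := -innerₗ (Rd d)) (e := 𝐞)
    (μ := volume) (ν := volume)
    Real.continuous_fourierChar (by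
      simp only [LinearMap.neg_apply, innerₗ_apply_apply]
      fun_prop) hV (𝓕 φ : SchwartzMap (Rd d) ℂ).integrable
  have e1 : ∀ x, VectorFourier.fourierIntegral 𝐞 volume (-innerₗ (Rd d)) V x = 𝓕⁻ V x := by
    intro x; rfl
  have e2 : ∀ x, VectorFourier.fourierIntegral 𝐞 volume (-innerₗ (Rd d)).flip (⇑(𝓕 φ : SchwartzMap (Rd d) ℂ)) x = φ x := by
    intro x
    have h1 : 𝓕⁻ (⇑(𝓕 φ : SchwartzMap (Rd d) ℂ)) x = φ x := by
      have : 𝓕⁻ (𝓕 φ) = φ := FourierTransform.fourierInv_fourier_eq φ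
      conv_rhs => rw [← this]
      rw [SchwartzMap.fourierInv_coe]
    rw [← h1, Real.fourierInv_eq]
    simp only [VectorFourier.fourierIntegral]
    congr 1
    ext y
    simp [real_inner_comm]
  simp only [e1, e2, smul_eq_mul] at key
  rw [← key]; rfl

lemma fourierInv_cont {d : ℕ} {V : Rd d → ℂ} (hV : Integrable V) : Continuous (𝓕⁻ V) :=
  VectorFourier.fourierIntegral_continuous Real.continuous_fourierChar
    (by simp only [LinearMap.neg_apply, innerₗ_apply_apply]; fun_prop) hV

lemma memLp_inv {d : ℕ} {V : Rd d → ℂ} (hV : Integrable V) (hV2 : MemLp V 2 volume) :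
    MemLp (𝓕⁻ V) 2 volume := by
  have h2 := isFT_unique (fourierInv_cont hV).locallyIntegrable
    (memLp_locInt (Lp.memLp _)) (isFT_inv hV) (isFT_lp hV2)
  exact (memLp_congr_ae h2).2 (Lp.memLp _)

lemma isFT_sub {d : ℕ} {U u V v : Rd d → ℂ} (hU : MemLp U 2 volume) (hu : MemLp u 2 volume)
    (hV : MemLp V 2 volume) (hv : MemLp v 2 volume) (h1 : IsFT U u) (h2 : IsFT V v) :
    IsFT (fun x => U x - V x) (fun x => u x - v x) := by
  intro φ
  simp only [sub_mul]
  have e : (𝓕 (⇑φ) : Rd d → ℂ) = ⇑(𝓕 φ : SchwartzMap (Rd d) ℂ) := rfl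
  rw [e, integral_sub (int_schwartz hU φ) (int_schwartz hV φ),
    integral_sub (int_schwartz hu (𝓕 φ)) (int_schwartz hv (𝓕 φ)), h1 φ, h2 φ]
  rfl

lemma ft_radial {d : ℕ} {U u : Rd d → ℂ} (hU : MemLp U 2 volume) (hr : Radial u)
    (h : IsFT U u) (R : Rd d ≃ₗᵢ[ℝ] Rd d) : (fun x => U (R x)) =ᵐ[volume] U := by
  have mp := R.measurePreserving
  have hU' : MemLp (fun x => U (R x)) 2 volume := hU.comp_measurePreserving mp
  refine ae_eq_of_schwartz (memLp_locInt hU') (memLp_locInt hU) (fun φ => ?_)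
  let ψ : SchwartzMap (Rd d) ℂ := SchwartzMap.compCLMOfContinuousLinearEquiv ℂ R.symm.toContinuousLinearEquiv φ
  have hψ : ∀ x, ψ x = φ (R.symm x) := fun x => rfl
  have a : ∫ x, U (R x) * φ x = ∫ x, U x * ψ x := by
    rw [← mp.integral_comp R.toHomeomorph.measurableEmbedding (fun x => U x * ψ x)]
    simp [hψ]
  have hF : ∀ x, 𝓕 (⇑ψ) x = 𝓕 (⇑φ) (R.symm x) := by
    intro x
    have : (⇑ψ) = (⇑φ) ∘ R.symm := rfl
    rw [this, Real.fourier_comp_linearIsometry]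
  rw [a, h ψ, h φ]
  simp only [hF]
  rw [← mp.integral_comp R.toHomeomorph.measurableEmbedding]
  congr 1; ext x
  simp only [LinearIsometryEquiv.symm_apply_apply]
  rw [hr (R x) x (by simp)]

lemma par_cos {α : Type*} [MeasurableSpace α] {μ : Measure α} [IsFiniteMeasure μ] {h A T : α → ℝ}
    (hh : Measurable h) (hA : Measurable A) (hT : Measurable T) {b : ℝ}
    (hb : ∀ x, |h x| ≤ b) (hTb : ∀ x, |T x| ≤ b) (t : ℝ) :
    HasDerivAt (fun t => ∫ x, h x * cos (A x + t * T x) ∂μ)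
      (∫ x, h x * (- sin (A x + t * T x) * T x) ∂μ) t := by
  refine (hasDerivAt_integral_of_dominated_loc_of_deriv_le (bound := fun _ => b * b)
    (F := fun t x => h x * cos (A x + t * T x)) (F' := fun t x => h x * (- sin (A x + t * T x) * T x))
    (Metric.ball_mem_nhds t one_pos) ?_ ?_ ?_ ?_ ?_ ?_).2
  · exact Eventually.of_forall fun s => (by fun_prop : Measurable _).aestronglyMeasurable
  · refine Integrable.of_bound (by fun_prop : Measurable _).aestronglyMeasurable b
      (Eventually.of_forall fun x => ?_)
    rw [norm_mul]
    have h0 : 0 ≤ |h x| := abs_nonneg _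
    calc _ ≤ |h x| * 1 := by gcongr; exacts [le_rfl, abs_cos_le_one _]
      _ ≤ b := by linarith [hb x]
  · exact (by fun_prop : Measurable _).aestronglyMeasurable
  · refine Eventually.of_forall fun x s _ => ?_
    rw [norm_mul, norm_mul, norm_neg]
    have h0 : 0 ≤ |h x| := abs_nonneg _
    have h1 : 0 ≤ |T x| := abs_nonneg _
    calc _ ≤ b * (1 * b) := by
          gcongr
          exacts [h0.trans (hb x), hb x, abs_sin_le_one _, hTb x]
      _ = b * b := by ring
  · exact integrable_const _
  · refine Eventually.of_forall fun x s _ => ?_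
    have : HasDerivAt (fun s => A x + s * T x) (T x) s := by
      simpa using ((hasDerivAt_id s).mul_const (T x)).const_add (A x)
    exact (this.cos).const_mul (h x)

lemma par_sin {α : Type*} [MeasurableSpace α] {μ : Measure α} [IsFiniteMeasure μ] {h A T : α → ℝ}
    (hh : Measurable h) (hA : Measurable A) (hT : Measurable T) {b : ℝ}
    (hb : ∀ x, |h x| ≤ b) (hTb : ∀ x, |T x| ≤ b) (t : ℝ) :
    HasDerivAt (fun t => ∫ x, h x * sin (A x + t * T x) ∂μ)
      (∫ x, h x * (cos (A x + t * T x) * T x) ∂μ) t := by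
  have := par_cos (μ := μ) hh (hA.sub_const (π/2)) hT hb hTb t
  have e : ∀ x t, A x - π/2 + t * T x = (A x + t * T x) - π/2 := fun x t => by ring
  simpa only [e, cos_sub_pi_div_two, sin_sub_pi_div_two, neg_neg] using this

/-- the direction of `x` -/
def nrm {d : ℕ} (i : Fin d) (x : Rd d) : ℝ := 2 * π * (‖x‖⁻¹ * x i)

lemma nrm_meas {d : ℕ} (i : Fin d) : Measurable (nrm i) := by
  unfold nrm; fun_prop

lemma nrm_bd {d : ℕ} (i : Fin d) (x : Rd d) : |nrm i x| ≤ 2 * π := by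
  unfold nrm
  rw [abs_mul, abs_of_pos (by positivity : (0:ℝ) < 2 * π), abs_mul, abs_inv, abs_norm]
  have h : |x i| ≤ ‖x‖ := by simpa using PiLp.norm_apply_le x i
  have : ‖x‖⁻¹ * |x i| ≤ 1 := by
    by_cases h0 : ‖x‖ = 0
    · simp [h0]
    · rw [inv_mul_le_iff₀ (by positivity)]; linarith
  nlinarith [pi_pos]

/-- ball measure -/
abbrev bm (d : ℕ) : Measure (Rd d) := volume.restrict (Metric.ball 0 1)

instance (d : ℕ) : IsFiniteMeasure (bm d) := ⟨by
  rw [Measure.restrict_apply_univ]; exact measure_ball_lt_top⟩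

def KK {d : ℕ} (y : Rd d) : ℝ := ∫ x, cos (2 * π * inner ℝ y (‖x‖⁻¹ • x)) ∂(bm d)

lemma KK_isom {d : ℕ} {y z : Rd d} (h : ‖y‖ = ‖z‖) : KK y = KK z := by
  let R := Submodule.reflection (ℝ ∙ (y - z))ᗮ
  have hR : R y = z := Submodule.reflection_sub h
  have mp : MeasurePreserving R volume volume := R.measurePreserving
  have mp2 : MeasurePreserving R (bm d) (bm d) := by
    have := mp.restrict_preimage (s := Metric.ball (0 : Rd d) 1) measurableSet_ball
    have e : R ⁻¹' Metric.ball (0 : Rd d) 1 = Metric.ball (0 : Rd d) 1 := by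
      ext x; simp
    rwa [e] at this
  unfold KK
  rw [← mp2.integral_comp R.toHomeomorph.measurableEmbedding
    (fun x => cos (2 * π * inner ℝ z (‖x‖⁻¹ • x)))]
  congr 1; ext x
  rw [LinearIsometryEquiv.norm_map, ← map_smul, ← hR, LinearIsometryEquiv.inner_map_map]

def Jb (d : ℕ) [NeZero d] (r : ℝ) : ℝ := ∫ x, cos (r * nrm 0 x) ∂(bm d)
def J1 (d : ℕ) [NeZero d] (r : ℝ) : ℝ := - ∫ x, nrm 0 x * sin (r * nrm 0 x) ∂(bm d)
def J2 (d : ℕ) [NeZero d] (r : ℝ) : ℝ := - ∫ x, nrm 0 x ^ 2 * cos (r * nrm 0 x) ∂(bm d)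

lemma KK_eq {d : ℕ} [NeZero d] (y : Rd d) : KK y = Jb d ‖y‖ := by
  have h : KK y = KK (EuclideanSpace.single (0 : Fin d) ‖y‖) := KK_isom (by simp)
  rw [h]
  unfold KK Jb nrm
  congr 1; ext x
  congr 1
  rw [EuclideanSpace.inner_single_left]
  simp
  ring

lemma Jb_deriv (d : ℕ) [NeZero d] (r : ℝ) : HasDerivAt (Jb d) (J1 d r) r := by
  have := par_cos (μ := bm d) (h := fun _ => (1:ℝ)) (A := fun _ => 0) (T := nrm 0) (b := 2 * π)
    measurable_const measurable_const (nrm_meas 0)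
    (fun x => by rw [abs_one]; linarith [pi_gt_three]) (nrm_bd 0) r
  simp only [zero_add, one_mul] at this
  unfold J1
  rw [← integral_neg]
  convert! this using 3
  ring

lemma J1_deriv (d : ℕ) [NeZero d] (r : ℝ) : HasDerivAt (J1 d) (J2 d r) r := by
  have := (par_sin (μ := bm d) (h := nrm 0) (A := fun _ => 0) (T := nrm 0) (b := 2 * π)
    (nrm_meas 0) measurable_const (nrm_meas 0) (nrm_bd 0) (nrm_bd 0) r).neg
  simp only [zero_add] at this
  unfold J2
  convert! this using 4
  ring

lemma Jb_two (d : ℕ) [NeZero d] {j : Fin d} (hj : j ≠ 0) (r t : ℝ) :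
    ∫ x, 1 * cos (r * nrm 0 x + t * nrm j x) ∂(bm d) = Jb d (√(r^2 + t^2)) := by
  have := KK_eq (EuclideanSpace.single (0 : Fin d) r + EuclideanSpace.single j t)
  have e : ‖(EuclideanSpace.single (0 : Fin d) r + EuclideanSpace.single j t : Rd d)‖ = √(r^2 + t^2) := by
    rw [← sqrt_sq (norm_nonneg _)]
    congr 1
    rw [@norm_add_sq_real]
    simp [EuclideanSpace.inner_single_left, hj.symm]
  rw [e] at this
  rw [← this]
  unfold KK nrm
  congr 1; ext x
  rw [one_mul, inner_add_left, EuclideanSpace.inner_single_left, EuclideanSpace.inner_single_left]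
  congr 1
  simp
  ring

lemma Jb_side (d : ℕ) [NeZero d] {j : Fin d} (hj : j ≠ 0) {r : ℝ} (hr : 0 < r) :
    - ∫ x, nrm j x ^ 2 * cos (r * nrm 0 x) ∂(bm d) = J1 d r / r := by
  have hs : ∀ t, HasDerivAt (fun t => √(r^2 + t^2)) (t / √(r^2 + t^2)) t := by
    intro t
    have h0 : HasDerivAt (fun t => r^2 + t^2) (2 * t) t := by
      simpa using (hasDerivAt_pow 2 t).const_add (r^2)
    have := h0.sqrt (by positivity)
    convert! this using 1
    field_simp
  have A1 : ∀ t, HasDerivAt (fun t => ∫ x, 1 * cos (r * nrm 0 x + t * nrm j x) ∂(bm d))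
      (∫ x, 1 * (- sin (r * nrm 0 x + t * nrm j x) * nrm j x) ∂(bm d)) t := fun t =>
    par_cos (μ := bm d) (h := fun _ => (1:ℝ)) (A := fun x => r * nrm 0 x) (T := nrm j) (b := 2 * π)
      measurable_const ((nrm_meas 0).const_mul r) (nrm_meas j)
      (fun x => by rw [abs_one]; linarith [pi_gt_three]) (nrm_bd j) t
  have A2 : ∀ t, (∫ x, nrm j x * sin (r * nrm 0 x + t * nrm j x) ∂(bm d))
      = - (J1 d (√(r^2 + t^2)) * (t / √(r^2 + t^2))) := by
    intro t
    have a := A1 t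
    simp only [Jb_two d hj] at a
    have b := (Jb_deriv d (√(r^2 + t^2))).comp t (hs t)
    have := a.unique b
    rw [← this, ← integral_neg]
    congr 1; ext x; ring
  have A3 := par_sin (μ := bm d) (h := nrm j) (A := fun x => r * nrm 0 x) (T := nrm j) (b := 2 * π)
      (nrm_meas j) ((nrm_meas 0).const_mul r) (nrm_meas j) (nrm_bd j) (nrm_bd j) 0
  simp only [A2] at A3
  have hr0 : √(r^2 + 0^2) = r := by simp [hr.le]
  have B1 : HasDerivAt (fun t => J1 d (√(r^2 + t^2))) (J2 d r * 0) 0 := by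
    have h1 := hs 0
    rw [zero_div] at h1
    have h2 := J1_deriv d (√(r^2 + 0^2))
    have := HasDerivAt.comp (0:ℝ) h2 h1
    rw [hr0] at this
    exact this
  have B2 : HasDerivAt (fun t => t / √(r^2 + t^2)) (1 / r) 0 := by
    have := (hasDerivAt_id (0:ℝ)).div (hs 0) (by rw [hr0]; exact hr.ne')
    rw [hr0] at this
    convert! this using 1
    simp
    field_simp
  have B3 := (B1.mul B2).neg
  have := A3.unique B3
  rw [hr0] at this
  have e : (∫ x, nrm j x * (cos (r * nrm 0 x + 0 * nrm j x) * nrm j x) ∂(bm d))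
    = ∫ x, nrm j x ^ 2 * cos (r * nrm 0 x) ∂(bm d) := by
    congr 1; ext x; rw [zero_mul, add_zero]; ring
  rw [← e, this]
  simp
  rw [div_eq_mul_inv]

lemma Jb_ode (d : ℕ) [NeZero d] {r : ℝ} (hr : 0 < r) :
    J2 d r + (d - 1) * (J1 d r / r) = - (4 * π^2) * Jb d r := by
  have h1 : ∑ j : Fin d, (- ∫ x, nrm j x ^ 2 * cos (r * nrm 0 x) ∂(bm d)) = - (4 * π^2) * Jb d r := by
    rw [Finset.sum_neg_distrib, ← integral_finsetSum, neg_mul, Jb, ← integral_const_mul]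
    · congr 1
      apply integral_congr_ae
      have h0 : ∀ᵐ x ∂(bm d), x ≠ 0 := by
        apply ae_restrict_of_ae
        have : Nontrivial (Rd d) := by
          have : Nonempty (Fin d) := ⟨0⟩
          infer_instance
        simp [ae_iff]
      filter_upwards [h0] with x hx
      rw [← Finset.sum_mul]
      congr 1
      simp only [nrm, mul_pow]
      rw [← Finset.mul_sum, ← Finset.mul_sum]
      have : ∑ i, x i ^ 2 = ‖x‖^2 := (EuclideanSpace.real_norm_sq_eq x).symm
      rw [this]
      have : ‖x‖ ≠ 0 := by simpa using hx
      field_simp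
      norm_num
    · intro j _
      refine Integrable.of_bound (C := (2*π)^2) ?_ (Eventually.of_forall fun x => ?_)
      · have := nrm_meas j
        have := nrm_meas (0 : Fin d)
        exact (by fun_prop : Measurable _).aestronglyMeasurable
      · rw [norm_mul, norm_pow]
        have := nrm_bd j x
        calc _ ≤ (2*π)^2 * 1 := by
              gcongr
              exacts [this, abs_cos_le_one _]
          _ = _ := by ring
  rw [← h1, Fintype.sum_eq_add_sum_compl (0 : Fin d)]
  congr 1
  rw [Finset.sum_congr rfl (g := fun _ => J1 d r / r)]
  · rw [Finset.sum_const, Finset.card_compl]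
    simp
    left
    rw [Nat.cast_sub (Nat.one_le_iff_ne_zero.2 (NeZero.ne d))]; simp
  · intro j hj
    exact Jb_side d (by simpa using hj) hr

lemma ode_energy {w w1 : ℝ → ℝ} {κ : ℝ} (h1 : ∀ r, 0 < r → HasDerivAt w (w1 r) r)
    (h2 : ∀ r, 0 < r → HasDerivAt w1 (-(4 * π^2) * w r + κ / r^2 * w r) r) {r1 : ℝ} (hr1 : 0 < r1)
    {r : ℝ} (hr : r1 ≤ r) :
    (w1 r1 ^ 2 + 4 * π^2 * w r1 ^ 2) * exp (-(|κ| / r1)) ≤ w1 r ^ 2 + 4 * π^2 * w r ^ 2 ∧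
    w1 r ^ 2 + 4 * π^2 * w r ^ 2 ≤ (w1 r1 ^ 2 + 4 * π^2 * w r1 ^ 2) * exp (|κ| / r1) := by
  have hE : ∀ r, 0 < r → HasDerivAt (fun r => w1 r ^ 2 + 4 * π^2 * w r ^ 2)
      (2 * κ / r^2 * (w r * w1 r)) r := by
    intro r hr
    have := ((h2 r hr).pow 2).add (((h1 r hr).pow 2).const_mul (4 * π^2))
    convert! this using 1
    simp
    ring
  have hexp : ∀ σ r, 0 < r → HasDerivAt (fun r => exp (σ / r)) (exp (σ / r) * (-σ / r^2)) r := by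
    intro σ r hr
    have : HasDerivAt (fun r => σ / r) (-σ / r^2) r := by
      simpa [div_eq_mul_inv, neg_mul] using ((hasDerivAt_inv hr.ne').const_mul σ)
    exact this.exp
  have hb : ∀ r, 0 < r → |2 * κ / r^2 * (w r * w1 r)| ≤ |κ| / r^2 * (w1 r ^ 2 + 4 * π^2 * w r ^ 2) := by
    intro r hr
    have a : |2 * (w r * w1 r)| ≤ w1 r ^ 2 + 4 * π^2 * w r ^ 2 := by
      have : 1 ≤ 4 * π^2 := by nlinarith [pi_gt_three]
      rw [abs_le]; constructor <;> nlinarith [sq_nonneg (w r + w1 r), sq_nonneg (w r - w1 r), sq_nonneg (w r)]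
    have e : 2 * κ / r^2 * (w r * w1 r) = κ / r^2 * (2 * (w r * w1 r)) := by ring
    rw [e, abs_mul, abs_div, abs_of_pos (by positivity : 0 < r^2)]
    gcongr
  have hpos : 0 < r := hr1.trans_le hr
  constructor
  · have mono : MonotoneOn (fun r => (w1 r ^ 2 + 4 * π^2 * w r ^ 2) * exp (-|κ| / r)) (Set.Ici r1) := by
      refine monotoneOn_of_hasDerivWithinAt_nonneg (convex_Ici r1) (fun x hx => ?_) (fun x hx => ?_)
        (f' := fun r => (2 * κ / r^2 * (w r * w1 r)) * exp (-|κ| / r) + (w1 r ^ 2 + 4 * π^2 * w r ^ 2) * (exp (-|κ| / r) * (-(-|κ|) / r^2))) ?_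
      · have hx0 := hr1.trans_le hx
        exact ((hE x hx0).mul (hexp _ x hx0)).continuousAt.continuousWithinAt
      · rw [interior_Ici] at hx
        have hx0 := hr1.trans hx
        exact ((hE x hx0).mul (hexp _ x hx0)).hasDerivWithinAt
      · intro x hx
        rw [interior_Ici] at hx
        have hx0 := hr1.trans hx
        have := (abs_le.1 (hb x hx0)).1
        have e : (2 * κ / x^2 * (w x * w1 x)) * exp (-|κ| / x) + (w1 x ^ 2 + 4 * π^2 * w x ^ 2) * (exp (-|κ| / x) * (-(-|κ|) / x^2)) = exp (-|κ| / x) * ((2 * κ / x^2 * (w x * w1 x)) + |κ| / x^2 * (w1 x ^ 2 + 4 * π^2 * w x ^ 2)) := by ring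
        rw [e]
        apply mul_nonneg (exp_pos _).le
        linarith
    have := mono (Set.mem_Ici.2 le_rfl) (Set.mem_Ici.2 hr) hr
    simp only at this
    rw [← neg_div]
    refine this.trans ?_
    apply mul_le_of_le_one_right (by positivity)
    rw [exp_le_one_iff, neg_div]
    have : 0 ≤ |κ| / r := by positivity
    linarith
  · have mono : AntitoneOn (fun r => (w1 r ^ 2 + 4 * π^2 * w r ^ 2) * exp (|κ| / r)) (Set.Ici r1) := by
      refine antitoneOn_of_hasDerivWithinAt_nonpos (convex_Ici r1) (fun x hx => ?_) (fun x hx => ?_)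
        (f' := fun r => (2 * κ / r^2 * (w r * w1 r)) * exp (|κ| / r) + (w1 r ^ 2 + 4 * π^2 * w r ^ 2) * (exp (|κ| / r) * (-(|κ|) / r^2))) ?_
      · have hx0 := hr1.trans_le hx
        exact ((hE x hx0).mul (hexp _ x hx0)).continuousAt.continuousWithinAt
      · rw [interior_Ici] at hx
        have hx0 := hr1.trans hx
        exact ((hE x hx0).mul (hexp _ x hx0)).hasDerivWithinAt
      · intro x hx
        rw [interior_Ici] at hx
        have hx0 := hr1.trans hx
        have := (abs_le.1 (hb x hx0)).2
        have e : (2 * κ / x^2 * (w x * w1 x)) * exp (|κ| / x) + (w1 x ^ 2 + 4 * π^2 * w x ^ 2) * (exp (|κ| / x) * (-(|κ|) / x^2)) = exp (|κ| / x) * ((2 * κ / x^2 * (w x * w1 x)) - |κ| / x^2 * (w1 x ^ 2 + 4 * π^2 * w x ^ 2)) := by ring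
        rw [e]
        apply mul_nonpos_of_nonneg_of_nonpos (exp_pos _).le
        linarith
    have := mono (Set.mem_Ici.2 le_rfl) (Set.mem_Ici.2 hr) hr
    simp only at this
    refine le_trans ?_ this
    apply le_mul_of_one_le_right (by positivity)
    rw [one_le_exp_iff]
    positivity

lemma ode_int {w w1 : ℝ → ℝ} {κ m M : ℝ} (h1 : ∀ r, 0 < r → HasDerivAt w (w1 r) r)
    (h2 : ∀ r, 0 < r → HasDerivAt w1 (-(4 * π^2) * w r + κ / r^2 * w r) r)
    (hm : ∀ r, 1 ≤ r → m ≤ w1 r ^ 2 + 4 * π^2 * w r ^ 2)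
    (hM : ∀ r, 1 ≤ r → w1 r ^ 2 + 4 * π^2 * w r ^ 2 ≤ M) {b R : ℝ} (hb : 0 ≤ b)
    (hR : 1 ≤ R) :
    ∫ ρ in (1:ℝ)..R, ρ ^ (-b) * (m - 8 * π^2 * w ρ ^ 2) ≤ (3 + |κ|) * M := by
  have hpi : 1 ≤ 4 * π^2 := by nlinarith [pi_gt_three]
  have hw : ∀ r, 1 ≤ r → |w r * w1 r| ≤ M := by
    intro r hr
    have := hM r hr
    rw [abs_le]; constructor <;> nlinarith [sq_nonneg (w r + w1 r), sq_nonneg (w r - w1 r), sq_nonneg (w r), sq_nonneg (w1 r)]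
  have hw2 : ∀ r, 1 ≤ r → w r ^ 2 ≤ M := by
    intro r hr
    have := hM r hr
    nlinarith [sq_nonneg (w r), sq_nonneg (w1 r)]
  have hM0 : 0 ≤ M := (sq_nonneg _).trans (hw2 1 le_rfl)
  let Ψ : ℝ → ℝ := fun ρ => ρ ^ (-b) * (w ρ * w1 ρ) - M * ρ ^ (-b) - M * |κ| * ρ⁻¹
  let Ψ' : ℝ → ℝ := fun ρ => ((-b) * ρ ^ (-b - 1) * (w ρ * w1 ρ) + ρ ^ (-b) * (w1 ρ * w1 ρ + w ρ * (-(4 * π^2) * w ρ + κ / ρ^2 * w ρ))) - M * ((-b) * ρ ^ (-b-1)) - M * |κ| * (-(ρ^2)⁻¹)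
  have hΨ : ∀ ρ, 0 < ρ → HasDerivAt Ψ (Ψ' ρ) ρ := by
    intro ρ hρ
    have hp : HasDerivAt (fun ρ : ℝ => ρ ^ (-b)) ((-b) * ρ ^ (-b - 1)) ρ :=
      hasDerivAt_rpow_const (Or.inl hρ.ne')
    exact ((hp.mul ((h1 ρ hρ).mul (h2 ρ hρ))).sub (hp.const_mul M)).sub ((hasDerivAt_inv hρ.ne').const_mul (M * |κ|))
  have hcw : ContinuousOn w (Set.Icc 1 R) := fun x hx => (h1 x (by linarith [hx.1])).continuousAt.continuousWithinAt
  have key := intervalIntegral.integral_le_sub_of_hasDeriv_right_of_le (g := Ψ) (g' := Ψ')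
    (φ := fun ρ => ρ ^ (-b) * (m - 8 * π^2 * w ρ ^ 2)) hR
    (fun x hx => (hΨ x (by linarith [hx.1])).continuousAt.continuousWithinAt)
    (fun x hx => (hΨ x (by linarith [hx.1])).hasDerivWithinAt)
    (by
      apply ContinuousOn.integrableOn_Icc
      apply ContinuousOn.mul
      · exact fun x hx => (continuousAt_rpow_const _ _ (Or.inl (by linarith [hx.1] : (0:ℝ) < x).ne')).continuousWithinAt
      · fun_prop)
    (by
      intro x hx
      have hx1 : 1 ≤ x := hx.1.le
      have hx0 : 0 < x := by linarith
      have hp : 0 < x ^ (-b) := rpow_pos_of_pos hx0 _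
      have hp1 : 0 < x ^ (-b-1) := rpow_pos_of_pos hx0 _
      have hple : x ^ (-b) ≤ 1 := rpow_le_one_of_one_le_of_nonpos hx1 (by linarith)
      have t1 : 0 ≤ b * x ^ (-b-1) * (M - w x * w1 x) := by
        apply mul_nonneg (by positivity)
        have := (abs_le.1 (hw x hx1)).2; linarith
      have t2 : 0 ≤ M * |κ| * (x^2)⁻¹ + x ^ (-b) * (κ / x^2 * w x ^ 2) := by
        have : |x ^ (-b) * (κ / x^2 * w x ^ 2)| ≤ 1 * (|κ| / x^2 * M) := by
          rw [abs_mul, abs_mul, abs_div, abs_of_pos hp, abs_of_nonneg (sq_nonneg (w x)), abs_of_pos (by positivity : 0 < x^2)]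
          gcongr
          exact hw2 x hx1
        have := (abs_le.1 this).1
        have e : M * |κ| * (x^2)⁻¹ = 1 * (|κ| / x^2 * M) := by field_simp
        rw [e]; linarith
      have t3 : 0 ≤ x ^ (-b) * (w1 x ^ 2 + 4 * π^2 * w x ^ 2 - m) :=
        mul_nonneg hp.le (by linarith [hm x hx1])
      show x ^ (-b) * (m - 8 * π^2 * w x ^ 2) ≤ Ψ' x
      have : Ψ' x = x ^ (-b) * (m - 8 * π^2 * w x ^ 2) + b * x ^ (-b-1) * (M - w x * w1 x) + (M * |κ| * (x^2)⁻¹ + x ^ (-b) * (κ / x^2 * w x ^ 2)) + x ^ (-b) * (w1 x ^ 2 + 4 * π^2 * w x ^ 2 - m) := by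
        simp only [Ψ']; ring
      linarith)
  refine key.trans ?_
  have hR0 : 0 < R := by linarith
  have hp : 0 < R ^ (-b) := rpow_pos_of_pos hR0 _
  have hple : R ^ (-b) ≤ 1 := rpow_le_one_of_one_le_of_nonpos hR (by linarith)
  have a1 : R ^ (-b) * (w R * w1 R) ≤ 1 * M := by
    calc _ ≤ R ^ (-b) * M := by gcongr; exact (abs_le.1 (hw R hR)).2
      _ ≤ 1 * M := by gcongr
  have a2 := (abs_le.1 (hw 1 le_rfl)).1
  have a3 : 0 ≤ M * R ^ (-b) := by positivity
  have a4 : 0 ≤ M * |κ| * R⁻¹ := by positivity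
  simp only [Ψ, one_rpow, inv_one]
  linarith

/-- half of `d - 1` -/
def ha (d : ℕ) : ℝ := ((d:ℝ) - 1) / 2

def wJ (d : ℕ) [NeZero d] (r : ℝ) : ℝ := r ^ ha d * Jb d r
def wJ1 (d : ℕ) [NeZero d] (r : ℝ) : ℝ := ha d * r ^ (ha d - 1) * Jb d r + r ^ ha d * J1 d r

lemma wJ_deriv (d : ℕ) [NeZero d] {r : ℝ} (hr : 0 < r) : HasDerivAt (wJ d) (wJ1 d r) r :=
  (hasDerivAt_rpow_const (Or.inl hr.ne')).mul (Jb_deriv d r)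

lemma wJ1_deriv (d : ℕ) [NeZero d] {r : ℝ} (hr : 0 < r) :
    HasDerivAt (wJ1 d) (-(4 * π^2) * wJ d r + (ha d * (ha d - 1)) / r^2 * wJ d r) r := by
  have h := ((((hasDerivAt_rpow_const (p := ha d - 1) (Or.inl hr.ne')).const_mul (ha d)).mul (Jb_deriv d r))).add
    ((hasDerivAt_rpow_const (p := ha d) (Or.inl hr.ne')).mul (J1_deriv d r))
  convert! h using 1
  have ode := Jb_ode d hr
  have e1 : r ^ (ha d - 1) = r ^ ha d / r := by rw [rpow_sub_one hr.ne']
  have e2 : r ^ (ha d - 1 - 1) = r ^ ha d / r^2 := by rw [rpow_sub_one hr.ne', e1]; field_simp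
  have hJ2 : J2 d r = - (4 * π^2) * Jb d r - 2 * ha d * (J1 d r / r) := by
    rw [← ode]; unfold ha; ring
  rw [hJ2, e1, e2, wJ]
  field_simp
  ring

def Bv (d : ℕ) : ℝ := (bm d).real Set.univ

lemma Bv_pos (d : ℕ) : 0 < Bv d := by
  unfold Bv bm
  rw [measureReal_restrict_apply_univ]
  exact ENNReal.toReal_pos (Metric.measure_ball_pos _ _ one_pos).ne' measure_ball_lt_top.ne

lemma Jb_le (d : ℕ) [NeZero d] (r : ℝ) : |Jb d r| ≤ Bv d := by
  have := norm_integral_le_of_norm_le_const (μ := bm d) (f := fun x => cos (r * nrm 0 x)) (C := 1)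
    (Eventually.of_forall fun x => abs_cos_le_one _)
  rw [one_mul] at this
  exact this

lemma Jb_ge (d : ℕ) [NeZero d] {r : ℝ} (hr : |r| ≤ 1 / (4 * π)) : 7 / 8 * Bv d ≤ Jb d r := by
  have h : ∫ x, (7/8 : ℝ) ∂(bm d) ≤ Jb d r := by
    apply integral_mono (integrable_const _)
    · refine Integrable.of_bound (C := 1) ?_ (Eventually.of_forall fun x => abs_cos_le_one _)
      have := nrm_meas (0 : Fin d)
      exact (by fun_prop : Measurable _).aestronglyMeasurable
    · intro x
      have h1 : |r * nrm 0 x| ≤ 1/2 := by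
        rw [abs_mul]
        calc _ ≤ 1 / (4 * π) * (2 * π) := by gcongr; exact nrm_bd 0 x
          _ = 1/2 := by field_simp; norm_num
      have h2 := one_sub_sq_div_two_le_cos (x := r * nrm 0 x)
      have h3 : (r * nrm 0 x)^2 ≤ (1/2)^2 := sq_le_sq' (by linarith [(abs_le.1 h1).1]) (abs_le.1 h1).2
      show (7/8:ℝ) ≤ cos (r * nrm 0 x)
      linarith
  simp only [integral_const, smul_eq_mul] at h
  unfold Bv
  linarith

lemma Jb_cont (d : ℕ) [NeZero d] : Continuous (Jb d) :=
  continuous_iff_continuousAt.2 fun r => (Jb_deriv d r).continuousAt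

/-- all the facts on the Bessel function needed -/
lemma Jb_facts (d : ℕ) [NeZero d] (hd : 2 ≤ d) : ∃ m M : ℝ, 0 < m ∧ 0 < M ∧
    (∀ r, 0 < r → |Jb d r| ≤ M * r ^ (-ha d)) ∧
    (∀ r, 1/10 ≤ r → |wJ d r| ≤ M) ∧
    (∀ x y, 1/10 ≤ x → 1/10 ≤ y → |wJ d x - wJ d y| ≤ M * |x - y|) ∧
    (∀ b R : ℝ, 0 ≤ b → 1 ≤ R → m * (∫ ρ in (1:ℝ)..R, ρ ^ (-b)) - M ≤ ∫ ρ in (1:ℝ)..R, ρ ^ (-b) * wJ d ρ ^ 2) := by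
  have ha0 : 0 < ha d := by
    unfold ha
    have : (2:ℝ) ≤ d := by exact_mod_cast hd
    linarith
  set κ := ha d * (ha d - 1)
  set r1 : ℝ := 1 / (4 * π) with hr1d
  have hr1 : 0 < r1 := by positivity
  have hr1' : r1 ≤ 1/10 := by
    rw [hr1d]; apply one_div_le_one_div_of_le (by norm_num); linarith [pi_gt_three]
  set E1 := wJ1 d r1 ^ 2 + 4 * π^2 * wJ d r1 ^ 2
  have hE1 : 0 < E1 := by
    have : 0 < wJ d r1 := mul_pos (rpow_pos_of_pos hr1 _)
      ((by have := Bv_pos d; positivity : 0 < 7/8 * Bv d).trans_le (Jb_ge d (by rw [abs_of_pos hr1])))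
    positivity
  have hen := fun r (hr : r1 ≤ r) => ode_energy (fun r hr => wJ_deriv d hr) (fun r hr => wJ1_deriv d hr) hr1 hr
  set m := E1 * exp (-(|κ| / r1))
  set M := E1 * exp (|κ| / r1)
  have hm : 0 < m := by positivity
  have hM : 0 < M := by positivity
  have hpi : 1 ≤ 4 * π^2 := by nlinarith [pi_gt_three]
  have b1 : ∀ r, r1 ≤ r → |wJ d r| ≤ √M := fun r hr => by
    apply abs_le_sqrt
    have := (hen r hr).2
    nlinarith [sq_nonneg (wJ d r), sq_nonneg (wJ1 d r)]
  have b2 : ∀ r, r1 ≤ r → |wJ1 d r| ≤ √M := fun r hr => by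
    apply abs_le_sqrt
    have := (hen r hr).2
    nlinarith [sq_nonneg (wJ d r), sq_nonneg (wJ1 d r)]
  have hB := Bv_pos d
  refine ⟨m / (8 * π^2), √M + (3 + |κ|) * M + Bv d * r1 ^ (ha d), by positivity, by positivity, ?_, ?_, ?_, ?_⟩
  · intro r hr
    rw [rpow_neg hr.le, ← div_eq_mul_inv, le_div_iff₀ (rpow_pos_of_pos hr _)]
    rcases le_total r1 r with h | h
    · have := b1 r h
      rw [wJ, abs_mul, abs_of_pos (rpow_pos_of_pos hr _), mul_comm] at this
      have : 0 ≤ Bv d * r1 ^ ha d := by positivity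
      have : 0 ≤ (3 + |κ|) * M := by positivity
      linarith
    · have : |Jb d r| * r ^ ha d ≤ Bv d * r1 ^ ha d := by
        gcongr
        exact Jb_le d r
      have : 0 ≤ (3 + |κ|) * M := by positivity
      have : 0 ≤ √M := by positivity
      linarith
  · intro r hr
    have := b1 r (hr1'.trans hr)
    have : 0 ≤ (3 + |κ|) * M + Bv d * r1 ^ (ha d) := by positivity
    linarith
  · intro x y hx hy
    have := Convex.norm_image_sub_le_of_norm_hasDerivWithin_le (f := wJ d) (f' := wJ1 d) (s := Set.Ici (1/10)) (C := √M)
      (fun x hx => (wJ_deriv d (by linarith [Set.mem_Ici.1 hx] : 0 < x)).hasDerivWithinAt)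
      (fun x hx => b2 x (hr1'.trans hx)) (convex_Ici _) (Set.mem_Ici.2 hy) (Set.mem_Ici.2 hx)
    simp only [norm_eq_abs] at this
    refine this.trans ?_
    gcongr
    have : 0 ≤ (3 + |κ|) * M + Bv d * r1 ^ (ha d) := by positivity
    linarith
  · intro b R hb hR
    have key := ode_int (fun r hr => wJ_deriv d hr) (fun r hr => wJ1_deriv d hr)
      (fun r hr => (hen r (by linarith)).1) (fun r hr => (hen r (by linarith)).2) hb hR
    have hc1 : ContinuousOn (fun ρ : ℝ => ρ ^ (-b)) (Set.uIcc 1 R) := by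
      rw [Set.uIcc_of_le hR]
      exact fun x hx => (continuousAt_rpow_const _ _ (Or.inl (by linarith [hx.1] : (0:ℝ) < x).ne')).continuousWithinAt
    have hc2 : ContinuousOn (wJ d) (Set.uIcc 1 R) := by
      rw [Set.uIcc_of_le hR]
      exact fun x hx => (wJ_deriv d (by linarith [hx.1] : (0:ℝ) < x)).continuousAt.continuousWithinAt
    have e : ∫ ρ in (1:ℝ)..R, ρ ^ (-b) * (m - 8 * π^2 * wJ d ρ ^ 2) = m * (∫ ρ in (1:ℝ)..R, ρ ^ (-b)) - 8 * π^2 * ∫ ρ in (1:ℝ)..R, ρ ^ (-b) * wJ d ρ ^ 2 := by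
      rw [← intervalIntegral.integral_const_mul, ← intervalIntegral.integral_const_mul, ← intervalIntegral.integral_sub]
      · congr 1; ext ρ; ring
      · exact (continuousOn_const.mul hc1).intervalIntegrable
      · exact (continuousOn_const.mul (hc1.mul (hc2.pow 2))).intervalIntegrable
    change ∫ ρ in (1:ℝ)..R, ρ ^ (-b) * (m - 8 * π^2 * wJ d ρ ^ 2) ≤ (3 + |κ|) * M at key
    rw [e] at key
    set I1 := ∫ ρ in (1:ℝ)..R, ρ ^ (-b)
    set I2 := ∫ ρ in (1:ℝ)..R, ρ ^ (-b) * wJ d ρ ^ 2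
    have h8 : 0 < 8 * π^2 := by positivity
    have : m / (8 * π^2) * I1 - (3 + |κ|) * M ≤ I2 := by
      have e2 : m / (8 * π^2) * I1 = (m * I1) / (8 * π^2) := by ring
      rw [e2, sub_le_iff_le_add, div_le_iff₀ h8]
      have : (3 + |κ|) * M * 1 ≤ (3 + |κ|) * M * (8 * π^2) := by gcongr; linarith
      linarith
    have : 0 ≤ √M + Bv d * r1 ^ (ha d) := by positivity
    linarith

lemma inv_radial {d : ℕ} {V : Rd d → ℂ}
    (h : ∀ R : Rd d ≃ₗᵢ[ℝ] Rd d, (fun x => V (R x)) =ᵐ[volume] V) : Radial (𝓕⁻ V) := by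
  intro x y hxy
  let R := Submodule.reflection (ℝ ∙ (x - y))ᗮ
  have hR : R x = y := Submodule.reflection_sub hxy
  have e : 𝓕⁻ (V ∘ R) x = 𝓕⁻ V (R x) := Real.fourierInv_comp_linearIsometry R V x
  rw [← hR, ← e, fourierInv_def', fourierInv_def']
  apply integral_congr_ae
  filter_upwards [h R] with z hz
  simp only [Function.comp]
  rw [hz]

lemma inv_norm_le {d : ℕ} (V : Rd d → ℂ) (x : Rd d) : ‖𝓕⁻ V x‖ ≤ ∫ ξ, ‖V ξ‖ := by
  rw [fourierInv_def']
  refine (norm_integral_le_integral_norm _).trans (le_of_eq ?_)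
  congr 1; ext ξ
  rw [norm_mul, Complex.norm_exp_ofReal_mul_I, one_mul]

lemma inv_cos {d : ℕ} {V : Rd d → ℂ} (hV : Integrable V) (hr : Radial (𝓕⁻ V)) (x : Rd d) :
    𝓕⁻ V x = ∫ ξ, ((cos (2 * π * inner ℝ ξ x) : ℝ) : ℂ) * V ξ := by
  have h1 : 𝓕⁻ V (-x) = 𝓕⁻ V x := hr _ _ (by simp)
  have h2 : 𝓕⁻ V x = (1/2 : ℂ) * (𝓕⁻ V x + 𝓕⁻ V (-x)) := by rw [h1]; ring
  rw [h2, fourierInv_def', fourierInv_def']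
  have hi : ∀ x : Rd d, Integrable (fun ξ => Complex.exp (↑(2 * π * inner ℝ ξ x) * Complex.I) * V ξ) := by
    intro x
    refine hV.norm.mono (AEStronglyMeasurable.mul ?_ hV.1) (Eventually.of_forall fun ξ => ?_)
    · exact (by fun_prop : Continuous _).aestronglyMeasurable
    · rw [norm_mul, Complex.norm_exp_ofReal_mul_I, one_mul, norm_norm]
  rw [← integral_add (hi x) (hi (-x)), ← integral_const_mul]
  congr 1; ext ξ
  rw [Complex.ofReal_cos, Complex.cos]
  simp only [inner_neg_right, mul_neg, Complex.ofReal_neg]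
  ring

lemma avg {d : ℕ} [NeZero d] {V : Rd d → ℂ} (hV : Integrable V) (hr : Radial (𝓕⁻ V)) (x : Rd d) :
    (Bv d : ℂ) * 𝓕⁻ V x = ∫ ξ, ((Jb d (‖x‖ * ‖ξ‖) : ℝ) : ℂ) * V ξ := by
  have h0 : ∀ᵐ z ∂(bm d), z ≠ 0 := by
    apply ae_restrict_of_ae
    have : Nontrivial (Rd d) := by
      have : Nonempty (Fin d) := ⟨0⟩
      infer_instance
    simp [ae_iff]
  have e1 : (Bv d : ℂ) * 𝓕⁻ V x = ∫ z, 𝓕⁻ V (‖x‖ • (‖z‖⁻¹ • z)) ∂(bm d) := by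
    have : ∫ z, 𝓕⁻ V (‖x‖ • (‖z‖⁻¹ • z)) ∂(bm d) = ∫ z, 𝓕⁻ V x ∂(bm d) := by
      apply integral_congr_ae
      filter_upwards [h0] with z hz
      apply hr
      have : ‖z‖ ≠ 0 := by simpa using hz
      rw [norm_smul, norm_smul, norm_inv, norm_norm, norm_norm, inv_mul_cancel₀ this, mul_one]
    rw [this, integral_const]
    simp [Bv]
  rw [e1]
  simp_rw [inv_cos hV hr]
  rw [integral_integral_swap]
  · congr 1; ext ξ
    rw [integral_mul_const]
    congr 1
    rw [integral_complex_ofReal]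
    congr 1
    have := KK_eq (‖x‖ • ξ)
    rw [norm_smul, norm_norm] at this
    rw [← this]
    unfold KK
    congr 1; ext z
    rw [inner_smul_left, inner_smul_right]
    rfl
  · have hc : Integrable (fun _ : Rd d => (1:ℝ)) (bm d) := integrable_const _
    refine (hc.mul_prod hV.norm).mono ?_ (Eventually.of_forall fun p => ?_)
    · refine AEStronglyMeasurable.mul ?_ hV.1.comp_snd
      apply Measurable.aestronglyMeasurable
      fun_prop
    · simp only [Function.uncurry, norm_mul, Complex.norm_real, norm_norm, norm_one]
      gcongr
      exact abs_cos_le_one _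

lemma decay {d : ℕ} [NeZero d] (hd : 2 ≤ d) : ∃ M : ℝ, 1 ≤ M ∧ ∀ V : Rd d → ℂ, Integrable V →
    Radial (𝓕⁻ V) → (∀ ξ, ‖ξ‖ < 1/2 → V ξ = 0) → ∀ x, x ≠ 0 →
    ‖𝓕⁻ V x‖ ≤ M * ‖x‖ ^ (-ha d) * ∫ ξ, ‖V ξ‖ := by
  obtain ⟨m, M, hm, hM, h1, -⟩ := Jb_facts d hd
  have hB := Bv_pos d
  have ha0 : 0 < ha d := by
    unfold ha
    have : (2:ℝ) ≤ d := by exact_mod_cast hd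
    linarith
  refine ⟨max 1 ((Bv d)⁻¹ * M * (1/2) ^ (-ha d)), le_max_left _ _, fun V hV hr hs x hx => ?_⟩
  have hx0 : 0 < ‖x‖ := norm_pos_iff.2 hx
  have e := avg hV hr x
  have e2 : ‖𝓕⁻ V x‖ = (Bv d)⁻¹ * ‖∫ ξ, ((Jb d (‖x‖ * ‖ξ‖) : ℝ) : ℂ) * V ξ‖ := by
    rw [← e, norm_mul, Complex.norm_real, norm_of_nonneg hB.le]
    field_simp
  have e3 : ‖∫ ξ, ((Jb d (‖x‖ * ‖ξ‖) : ℝ) : ℂ) * V ξ‖ ≤ ∫ ξ, M * ‖x‖ ^ (-ha d) * (1/2) ^ (-ha d) * ‖V ξ‖ := by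
    apply norm_integral_le_of_norm_le (hV.norm.const_mul _)
    refine Eventually.of_forall fun ξ => ?_
    rw [norm_mul, Complex.norm_real]
    by_cases hξ : ‖ξ‖ < 1/2
    · rw [hs ξ hξ]; simp
    · push Not at hξ
      gcongr
      have hξ0 : 0 < ‖ξ‖ := by linarith
      refine (h1 _ (mul_pos hx0 hξ0)).trans ?_
      rw [mul_rpow hx0.le hξ0.le, ← mul_assoc]
      gcongr ?_ * ?_
      exact rpow_le_rpow_of_nonpos (by norm_num) hξ (by linarith)
  rw [integral_const_mul] at e3
  rw [e2]
  have hI : 0 ≤ ∫ ξ, ‖V ξ‖ := integral_nonneg fun _ => norm_nonneg _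
  have hp : 0 ≤ ‖x‖ ^ (-ha d) := by positivity
  calc _ ≤ (Bv d)⁻¹ * (M * ‖x‖ ^ (-ha d) * (1/2) ^ (-ha d) * ∫ ξ, ‖V ξ‖) := by gcongr
    _ = ((Bv d)⁻¹ * M * (1/2) ^ (-ha d)) * ‖x‖ ^ (-ha d) * ∫ ξ, ‖V ξ‖ := by ring
    _ ≤ _ := by gcongr; exact le_max_right _ _

lemma lp_iff {α : Type*} [MeasurableSpace α] {μ : Measure α} {f : α → ℂ} {p T : ℝ} (hp : 0 < p) (hT : 0 ≤ T) :
    eLpNorm f (ENNReal.ofReal p) μ ≤ ENNReal.ofReal T ↔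
      ∫⁻ x, ‖f x‖ₑ ^ p ∂μ ≤ ENNReal.ofReal (T ^ p) := by
  rw [eLpNorm_eq_lintegral_rpow_enorm_toReal (by simpa using hp) ENNReal.ofReal_ne_top,
    ENNReal.toReal_ofReal hp.le, one_div, ENNReal.rpow_inv_le_iff hp,
    ENNReal.ofReal_rpow_of_nonneg hT hp.le]

lemma l2_iff {α : Type*} [MeasurableSpace α] {μ : Measure α} {f : α → ℂ} {T : ℝ} (hT : 0 ≤ T) :
    eLpNorm f 2 μ ≤ ENNReal.ofReal T ↔
      ∫⁻ x, ‖f x‖ₑ ^ 2 ∂μ ≤ ENNReal.ofReal (T ^ 2) := by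
  have := lp_iff (μ := μ) (f := f) (p := 2) two_pos hT
  simpa using this

lemma interp {α : Type*} [MeasurableSpace α] {μ : Measure α} {f : α → ℂ} {p B T : ℝ} (hp : 2 < p)
    (hB : ∀ x, ‖f x‖ ≤ B) (hB0 : 0 ≤ B) (hT0 : 0 ≤ T) (hT : eLpNorm f 2 μ ≤ ENNReal.ofReal T) :
    eLpNorm f (ENNReal.ofReal p) μ ≤ ENNReal.ofReal (B ^ (1 - 2/p) * T ^ (2/p)) := by
  rw [lp_iff (by linarith) (by positivity)]
  rw [l2_iff hT0] at hT
  calc ∫⁻ x, ‖f x‖ₑ ^ p ∂μ ≤ ∫⁻ x, ENNReal.ofReal (B ^ (p-2)) * ‖f x‖ₑ ^ 2 ∂μ := by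
        apply lintegral_mono
        intro x
        dsimp only
        rw [← ofReal_norm, ENNReal.ofReal_rpow_of_nonneg (norm_nonneg _) (by linarith), ← ENNReal.ofReal_pow (norm_nonneg _),
          ← ENNReal.ofReal_mul (by positivity)]
        apply ENNReal.ofReal_le_ofReal
        have : ‖f x‖ ^ p = ‖f x‖ ^ (p-2) * ‖f x‖ ^ 2 := by
          rw [← Real.rpow_natCast, ← Real.rpow_add_of_nonneg (norm_nonneg _) (by linarith) (by norm_num)]
          norm_num
        rw [this]
        gcongr
        exact hB x
    _ = ENNReal.ofReal (B ^ (p-2)) * ∫⁻ x, ‖f x‖ₑ ^ 2 ∂μ := lintegral_const_mul' _ _ ENNReal.ofReal_ne_top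
    _ ≤ ENNReal.ofReal (B ^ (p-2)) * ENNReal.ofReal (T^2) := by gcongr
    _ = _ := by
        rw [← ENNReal.ofReal_mul (by positivity), Real.mul_rpow (by positivity) (by positivity),
          ← Real.rpow_mul hB0, ← Real.rpow_mul hT0, ← Real.rpow_natCast]
        congr 3
        · field_simp
        · field_simp; norm_num

lemma cs_int {d : ℕ} {V : Rd d → ℂ} {S : Set (Rd d)} {T : ℝ} (hS : MeasurableSet S) (hSf : volume S ≠ ∞)
    (hV : MemLp V 2 volume) (h0 : ∀ ξ, ξ ∉ S → V ξ = 0) (hT0 : 0 ≤ T)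
    (hT : eLpNorm V 2 volume ≤ ENNReal.ofReal T) :
    Integrable V ∧ ∫ ξ, ‖V ξ‖ ≤ √(volume.real S) * T := by
  have hind : S.indicator V = V := by
    rw [Set.indicator_eq_self]; intro ξ hξ; by_contra h; exact hξ (h0 ξ h)
  have e1 : eLpNorm V 1 volume ≤ ENNReal.ofReal (√(volume.real S) * T) := by
    rw [← hind, eLpNorm_indicator_eq_eLpNorm_restrict hS]
    refine (eLpNorm_le_eLpNorm_mul_rpow_measure_univ one_le_two hV.1.restrict).trans ?_
    rw [mul_comm (√_), ENNReal.ofReal_mul hT0]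
    gcongr
    · exact (eLpNorm_restrict_le V 2 volume S).trans hT
    · rw [Measure.restrict_apply_univ, ← ENNReal.ofReal_toReal hSf, ENNReal.ofReal_rpow_of_nonneg (by positivity) (by norm_num)]
      rw [Real.sqrt_eq_rpow]
      norm_num [Measure.real]
  have hi : Integrable V := memLp_one_iff_integrable.mp ⟨hV.1, e1.trans_lt ENNReal.ofReal_lt_top⟩
  refine ⟨hi, ?_⟩
  rw [integral_norm_eq_lintegral_enorm hi.1, ← eLpNorm_one_eq_lintegral_enorm]
  exact ENNReal.toReal_le_of_le_ofReal (by positivity) e1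

lemma vol_ball {d : ℕ} [NeZero d] {A : ℝ} (hA : 0 ≤ A) :
    volume.real (Metric.ball (0 : Rd d) A) = Bv d * A ^ d := by
  rw [Measure.real, Measure.addHaar_ball _ _ hA]
  simp only [Bv, bm, Measure.real, Measure.restrict_apply_univ, ENNReal.toReal_mul]
  rw [ENNReal.toReal_ofReal (by positivity)]
  simp [mul_comm]

lemma bern {d : ℕ} [NeZero d] {V : Rd d → ℂ} {p A T : ℝ} (hp : 2 < p) (hA : 0 < A)
    (hV : MemLp V 2 volume) (h0 : ∀ ξ, A ≤ ‖ξ‖ → V ξ = 0) (hT0 : 0 ≤ T)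
    (hT : eLpNorm V 2 volume ≤ ENNReal.ofReal T) :
    Integrable V ∧ eLpNorm (𝓕⁻ V) (ENNReal.ofReal p) volume ≤
      ENNReal.ofReal ((Bv d * A ^ d) ^ (1/2 - 1/p) * T) := by
  obtain ⟨hi, hb⟩ := cs_int (S := Metric.ball 0 A) measurableSet_ball measure_ball_lt_top.ne hV
    (fun ξ h => h0 ξ (by simpa using h)) hT0 hT
  refine ⟨hi, ?_⟩
  rw [vol_ball hA.le] at hb
  have hB := Bv_pos d
  refine (interp hp (B := √(Bv d * A ^ d) * T) (fun x => (inv_norm_le V x).trans hb) (by positivity) hT0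
    ((plancherel hV (memLp_inv hi hV) (isFT_inv hi)).trans_le hT)).trans (le_of_eq ?_)
  congr 1
  rw [Real.sqrt_eq_rpow, Real.mul_rpow (by positivity) hT0, ← Real.rpow_mul (by positivity), mul_assoc,
    ← Real.rpow_add_of_nonneg hT0]
  · have : (1 - 2/p + 2/p) = 1 := by ring
    rw [this, Real.rpow_one]
    congr 2
    field_simp
  · rw [sub_nonneg, div_le_one (by linarith)]; linarith
  · positivity

lemma tail_l2 {d : ℕ} {U V : Rd d → ℂ} {s A N : ℝ} (hs : 0 ≤ s) (hA : 0 < A) (hN0 : 0 ≤ N)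
    (hN : ∫⁻ ξ, ‖U ξ‖ₑ ^ 2 * ENNReal.ofReal ((1 + ‖ξ‖ ^ 2) ^ s) ≤ ENNReal.ofReal (N ^ 2))
    (h1 : ∀ ξ, V ξ = 0 ∨ V ξ = U ξ ∧ (A ≤ ‖ξ‖ ∨ A ≤ 1)) :
    eLpNorm V 2 volume ≤ ENNReal.ofReal (A ^ (-s) * N) := by
  rw [l2_iff (by positivity)]
  calc ∫⁻ ξ, ‖V ξ‖ₑ ^ 2 ≤ ∫⁻ ξ, ENNReal.ofReal (A ^ (-(2*s))) * (‖U ξ‖ₑ ^ 2 * ENNReal.ofReal ((1 + ‖ξ‖ ^ 2) ^ s)) := by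
        apply lintegral_mono
        intro ξ
        dsimp only
        rcases h1 ξ with h | ⟨h, h'⟩
        · rw [h]; simp
        · rw [h, mul_comm, mul_assoc, ← ENNReal.ofReal_mul (by positivity)]
          nth_rewrite 1 [← mul_one (‖U ξ‖ₑ ^ 2)]
          gcongr
          rw [ENNReal.one_le_ofReal]
          have : A ^ 2 ≤ 1 + ‖ξ‖ ^ 2 := by
            rcases h' with h' | h'
            · have := pow_le_pow_left₀ hA.le h' 2; linarith
            · have := pow_le_pow_left₀ hA.le h' 2; nlinarith [sq_nonneg ‖ξ‖]
          have h3 : (A ^ 2) ^ s ≤ (1 + ‖ξ‖ ^ 2) ^ s := by gcongr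
          have h4 : (A ^ 2) ^ s * A ^ (-(2*s)) = 1 := by
            rw [← Real.rpow_natCast, ← Real.rpow_mul hA.le, ← Real.rpow_add hA]; norm_num
          exact h4.symm.le.trans (mul_le_mul_of_nonneg_right h3 (by positivity))
    _ = ENNReal.ofReal (A ^ (-(2*s))) * ∫⁻ ξ, (‖U ξ‖ₑ ^ 2 * ENNReal.ofReal ((1 + ‖ξ‖ ^ 2) ^ s)) :=
        lintegral_const_mul' _ _ ENNReal.ofReal_ne_top
    _ ≤ ENNReal.ofReal (A ^ (-(2*s))) * ENNReal.ofReal (N ^ 2) := by gcongr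
    _ = _ := by
        rw [← ENNReal.ofReal_mul (by positivity), mul_pow, ← Real.rpow_natCast (A ^ (-s)), ← Real.rpow_mul hA.le]
        congr 3; push_cast; ring

lemma sobolev {d : ℕ} (hd : 2 ≤ d) {s p : ℝ} (hs : 0 < s) (hp : 2 < p)
    (hps : s < (d : ℝ) / 2 → p < 2 * (d : ℝ) / ((d : ℝ) - 2 * s)) :
    ∃ K : ℝ, 0 < K ∧ ∀ (U u : Rd d → ℂ) (N : ℝ), MemLp U 2 volume → MemLp u 2 volume → IsFT U u → 0 ≤ N →
      ∫⁻ ξ, ‖U ξ‖ₑ ^ 2 * ENNReal.ofReal ((1 + ‖ξ‖ ^ 2) ^ s) ≤ ENNReal.ofReal (N ^ 2) →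
      eLpNorm u (ENNReal.ofReal p) volume ≤ ENNReal.ofReal (K * N) := by
  haveI : NeZero d := ⟨by omega⟩
  have hd0 : (2:ℝ) ≤ d := by exact_mod_cast hd
  have hB := Bv_pos d
  set θ : ℝ := 1/2 - 1/p with hθ
  have hθs : d * θ - s < 0 := by
    rcases lt_or_ge s ((d:ℝ)/2) with h | h
    · have h1 := hps h
      have h2 : 0 < (d:ℝ) - 2 * s := by linarith
      rw [lt_div_iff₀ h2] at h1
      rw [hθ]
      have : (d:ℝ) * (1/2 - 1/p) - s = (p * (d - 2*s) - 2 * d) / (2 * p) := by field_simp; ring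
      rw [this]
      apply div_neg_of_neg_of_pos <;> linarith
    · rw [hθ]
      have : (d:ℝ) * (1/2 - 1/p) - s = (d/2 - s) - d / p := by ring
      have : 0 < (d:ℝ) / p := by apply div_pos <;> linarith
      linarith
  have hθ0 : 0 < θ := by
    rw [hθ, sub_pos]; apply one_div_lt_one_div_of_lt <;> linarith
  set r : ℝ := 2 ^ (d * θ - s) with hr
  have hr0 : 0 < r := by positivity
  have hr1 : r < 1 := Real.rpow_lt_one_of_one_lt_of_neg one_lt_two hθs
  set a0 : ℝ := (Bv d) ^ θ * 2 ^ s with ha0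
  have ha0p : 0 < a0 := by positivity
  have ha : ∀ j : ℕ, (Bv d * ((2:ℝ) ^ j) ^ d) ^ θ * ((2:ℝ) ^ j / 2) ^ (-s) = a0 * r ^ j := by
    intro j
    rw [ha0, hr, ← Real.rpow_natCast (2:ℝ) j, ← Real.rpow_natCast ((2:ℝ) ^ (j:ℝ)) d, ← Real.rpow_natCast ((2:ℝ) ^ (d * θ - s)) j,
      Real.mul_rpow (by positivity) (by positivity), Real.div_rpow (by positivity) (by positivity),
      Real.rpow_neg (by norm_num : (0:ℝ) ≤ 2) s, div_inv_eq_mul, ← Real.rpow_mul (by norm_num), ← Real.rpow_mul (by norm_num),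
      ← Real.rpow_mul (by norm_num), ← Real.rpow_mul (by norm_num)]
    rw [mul_assoc, ← mul_assoc ((2:ℝ) ^ _), ← Real.rpow_add (by norm_num), mul_assoc, mul_comm ((2:ℝ)^s)]
    congr 3
    ring
  refine ⟨a0 * (1 - r)⁻¹, by have : 0 < 1 - r := by linarith
                             positivity, ?_⟩
  intro U u N hU hu hft hN0 hN
  set W : ℕ → Rd d → ℂ := fun n => Set.indicator {ξ | ‖ξ‖ < 2 ^ n} U with hW
  have hmeas : ∀ n : ℕ, MeasurableSet {ξ : Rd d | ‖ξ‖ < 2 ^ n} := fun n =>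
    measurableSet_lt (by fun_prop) (by fun_prop)
  have hWL : ∀ n, MemLp (W n) 2 volume := fun n => hU.indicator (hmeas n)
  have hW0 : ∀ n ξ, (2:ℝ) ^ n ≤ ‖ξ‖ → W n ξ = 0 := by
    intro n ξ h; simp only [hW]; rw [Set.indicator_of_notMem]; simpa using h
  have hWi : ∀ n, Integrable (W n) := fun n =>
    (bern hp (A := 2 ^ n) (by positivity) (hWL n) (hW0 n) (T := (eLpNorm (W n) 2 volume).toReal) (by positivity)
      (by rw [ENNReal.ofReal_toReal (hWL n).2.ne])).1
  have hbound : ∀ n, eLpNorm (𝓕⁻ (W n)) (ENNReal.ofReal p) volume ≤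
      ENNReal.ofReal (∑ j ∈ Finset.range (n+1), a0 * r ^ j * N) := by
    intro n
    induction n with
    | zero =>
      have h1 := tail_l2 (V := W 0) hs.le (A := 2 ^ 0 / 2) (by norm_num) hN0 hN (fun ξ => by
        by_cases h : ‖ξ‖ < 2 ^ 0
        · right; exact ⟨Set.indicator_of_mem (by exact h) _, by norm_num⟩
        · left; exact hW0 0 ξ (not_lt.mp h))
      have h2 := (bern hp (A := 2 ^ 0) (by positivity) (hWL 0) (hW0 0) (by positivity) h1).2
      rw [← mul_assoc, ha 0] at h2
      simpa using h2
    | succ n ih =>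
      have hVL : MemLp (fun ξ => W (n+1) ξ - W n ξ) 2 volume := (hWL (n+1)).sub (hWL n)
      have hV0 : ∀ ξ, (2:ℝ) ^ (n+1) ≤ ‖ξ‖ → W (n+1) ξ - W n ξ = 0 := by
        intro ξ h
        rw [hW0 _ _ h, hW0 n ξ, sub_zero]
        refine le_trans ?_ h
        exact pow_le_pow_right₀ one_le_two (by omega)
      have h1 := tail_l2 (V := fun ξ => W (n+1) ξ - W n ξ) hs.le (A := 2 ^ (n+1) / 2) (by positivity) hN0 hN (fun ξ => by
        by_cases h : ‖ξ‖ < 2 ^ n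
        · left
          have h' : ‖ξ‖ < 2 ^ (n+1) := h.trans_le (pow_le_pow_right₀ one_le_two (by omega))
          simp only [hW]
          rw [Set.indicator_of_mem (by exact h'), Set.indicator_of_mem (by exact h), sub_self]
        · rw [hW0 n ξ (not_lt.mp h), sub_zero]
          by_cases h' : ‖ξ‖ < 2 ^ (n+1)
          · right
            refine ⟨Set.indicator_of_mem (by exact h') _, Or.inl ?_⟩
            rw [pow_succ, mul_div_cancel_right₀ _ (by norm_num)]
            exact not_lt.mp h
          · left
            exact hW0 _ _ (not_lt.mp h'))
      have h2 := (bern hp (A := 2 ^ (n+1)) (by positivity) hVL hV0 (by positivity) h1).2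
      rw [← mul_assoc, ha (n+1)] at h2
      have e : 𝓕⁻ (W (n+1)) = 𝓕⁻ (W n) + 𝓕⁻ (fun ξ => W (n+1) ξ - W n ξ) := by
        ext x
        have hi : ∀ V : Rd d → ℂ, Integrable V → Integrable (fun ξ => Complex.exp (↑(2 * π * inner ℝ ξ x) * Complex.I) * V ξ) := by
          intro V hV
          refine hV.norm.mono (AEStronglyMeasurable.mul ?_ hV.1) (Eventually.of_forall fun ξ => ?_)
          · exact (by fun_prop : Continuous _).aestronglyMeasurable
          · rw [norm_mul, Complex.norm_exp_ofReal_mul_I, one_mul, norm_norm]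
        rw [Pi.add_apply, fourierInv_def', fourierInv_def', fourierInv_def', ← integral_add (hi _ (hWi n)) (hi (fun ξ => W (n+1) ξ - W n ξ) ((hWi (n+1)).sub (hWi n)))]
        congr 1; ext ξ; ring
      rw [e, Finset.sum_range_succ, ENNReal.ofReal_add (by positivity) (by positivity)]
      refine (eLpNorm_add_le (fourierInv_cont (hWi n)).aestronglyMeasurable
        (fourierInv_cont ((hWi (n+1)).sub (hWi n))).aestronglyMeasurable ?_).trans (add_le_add ih h2)
      rw [ENNReal.one_le_ofReal]; linarith
  have hbound2 : ∀ n, eLpNorm (𝓕⁻ (W n)) (ENNReal.ofReal p) volume ≤ ENNReal.ofReal (a0 * (1 - r)⁻¹ * N) := by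
    intro n
    refine (hbound n).trans (ENNReal.ofReal_le_ofReal ?_)
    rw [← Finset.sum_mul, ← Finset.mul_sum]
    gcongr
    rw [← tsum_geometric_of_lt_one hr0.le hr1]
    exact (summable_geometric_of_lt_one hr0.le hr1).sum_le_tsum _ (fun i _ => by positivity)
  have hlim : Tendsto (fun n => eLpNorm (𝓕⁻ (W n) - u) 2 volume) atTop (𝓝 0) := by
    have hb : ∀ n, eLpNorm (𝓕⁻ (W n) - u) 2 volume ≤ ENNReal.ofReal ((2 ^ n) ^ (-s) * N) := by
      intro n
      rw [eLpNorm_sub_comm]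
      have h1 := isFT_sub hU hu (hWL n) (memLp_inv (hWi n) (hWL n)) hft (isFT_inv (hWi n))
      have h2 := plancherel (hU.sub (hWL n)) (hu.sub (memLp_inv (hWi n) (hWL n))) h1
      rw [h2]
      refine tail_l2 hs.le (by positivity) hN0 hN (fun ξ => ?_)
      by_cases h : ‖ξ‖ < 2 ^ n
      · left
        simp only [hW, Pi.sub_apply]
        rw [Set.indicator_of_mem (by exact h), sub_self]
      · right
        rw [Pi.sub_apply, hW0 n ξ (not_lt.mp h), sub_zero]
        exact ⟨rfl, Or.inl (not_lt.mp h)⟩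
    refine tendsto_of_tendsto_of_tendsto_of_le_of_le tendsto_const_nhds ?_ (fun n => zero_le) hb
    rw [← ENNReal.ofReal_zero]
    apply ENNReal.tendsto_ofReal
    have : (fun n : ℕ => ((2:ℝ) ^ n) ^ (-s) * N) = fun n => ((2:ℝ) ^ (-s)) ^ n * N := by
      ext n
      rw [← Real.rpow_natCast, ← Real.rpow_natCast, ← Real.rpow_mul (by norm_num), ← Real.rpow_mul (by norm_num), mul_comm (n:ℝ)]
    rw [this]
    have := (tendsto_pow_atTop_nhds_zero_of_lt_one (r := (2:ℝ) ^ (-s)) (by positivity)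
      (Real.rpow_lt_one_of_one_lt_of_neg one_lt_two (by linarith))).mul_const N
    simpa using this
  obtain ⟨ns, -, hns⟩ := (tendstoInMeasure_of_tendsto_eLpNorm two_ne_zero
    (fun n => (fourierInv_cont (hWi n)).aestronglyMeasurable) hu.1 hlim).exists_seq_tendsto_ae
  refine (Lp.eLpNorm_lim_le_liminf_eLpNorm
    (fun n => (fourierInv_cont (hWi (ns n))).aestronglyMeasurable) u hns).trans ?_
  refine Filter.liminf_le_of_le ?_ ?_
  · isBoundedDefault
  · intro b hb
    obtain ⟨n, hn⟩ := hb.exists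
    exact hn.trans (hbound2 _)

lemma polar0 {d : ℕ} [NeZero d] (f : ℝ → ℝ) :
    ∫ x : Rd d, f ‖x‖ = d * Bv d * ∫ y in Set.Ioi (0:ℝ), y ^ (d-1) * f y := by
  rw [integral_fun_norm_addHaar volume f]
  simp only [nsmul_eq_mul, smul_eq_mul, finrank_euclideanSpace_fin]
  simp [Bv, bm, Measure.real, mul_assoc]

lemma polar {d : ℕ} [NeZero d] {a b : ℝ} (ha : 0 ≤ a) (hab : a ≤ b) (f : ℝ → ℝ) :
    ∫ x : Rd d, (Set.Ioc a b).indicator f ‖x‖ = d * Bv d * ∫ y in a..b, y ^ (d-1) * f y := by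
  rw [polar0, intervalIntegral.integral_of_le hab]
  congr 1
  have : (fun y : ℝ => y ^ (d-1) * (Set.Ioc a b).indicator f y) =
      (Set.Ioc a b).indicator (fun y => y ^ (d-1) * f y) := by
    ext y; by_cases h : y ∈ Set.Ioc a b <;> simp [h]
  rw [this, setIntegral_indicator measurableSet_Ioc]
  congr 2
  ext y; simp only [Set.mem_inter_iff, Set.mem_Ioi, Set.mem_Ioc]
  constructor
  · intro h; exact h.2
  · intro h; exact ⟨ha.trans_lt h.1, h⟩

lemma polar_int {d : ℕ} {a b B : ℝ} {f : ℝ → ℝ} (hf : Measurable f)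
    (hB : ∀ y ∈ Set.Ioc a b, |f y| ≤ B) :
    Integrable (fun x : Rd d => (Set.Ioc a b).indicator f ‖x‖) := by
  have hms : MeasurableSet {x : Rd d | ‖x‖ ∈ Set.Ioc a b} := measurableSet_Ioc.preimage measurable_norm
  have e : (fun x : Rd d => (Set.Ioc a b).indicator f ‖x‖) =
      {x : Rd d | ‖x‖ ∈ Set.Ioc a b}.indicator (fun x => f ‖x‖) := by
    ext x; simp [Set.indicator]
  rw [e, integrable_indicator_iff hms]
  have hfin : volume {x : Rd d | ‖x‖ ∈ Set.Ioc a b} ≠ ∞ := by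
    refine ((measure_mono ?_).trans_lt (measure_closedBall_lt_top (x := (0 : Rd d)) (r := b))).ne
    intro x hx; simpa using hx.2
  refine IntegrableOn.of_bound hfin.lt_top (hf.comp measurable_norm).aestronglyMeasurable B ?_
  rw [ae_restrict_iff' hms]
  exact Eventually.of_forall fun x hx => hB _ hx

lemma G_int {γ : ℝ} (hγ : 1 < γ) : Integrable (fun t : ℝ => 1 / (1 + |t| ^ γ)) := by
  have h1 : Integrable (fun x : ℝ => (1 + ‖x‖) ^ (-γ)) := integrable_one_add_norm (by simpa using hγ)
  refine (h1.const_mul (2 ^ γ)).mono (by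
    apply Measurable.aestronglyMeasurable; fun_prop) (Eventually.of_forall fun t => ?_)
  have h2 : 0 ≤ |t| := abs_nonneg t
  have h3 : (0:ℝ) < |t| ^ γ + 1 := by positivity
  rw [Real.norm_of_nonneg (by positivity), Real.norm_of_nonneg (by positivity), Real.norm_eq_abs,
    Real.rpow_neg (by positivity), ← div_eq_mul_inv, div_le_div_iff₀ (by positivity) (by positivity), one_mul]
  rcases le_total |t| 1 with h | h
  · calc (1 + |t|) ^ γ ≤ (2:ℝ) ^ γ := by gcongr; linarith
      _ ≤ 2 ^ γ * (1 + |t| ^ γ) := by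
        have : (0:ℝ) ≤ 2 ^ γ := by positivity
        nlinarith [Real.rpow_nonneg h2 γ]
  · calc (1 + |t|) ^ γ ≤ (2 * |t|) ^ γ := by gcongr; linarith
      _ = 2 ^ γ * |t| ^ γ := Real.mul_rpow (by norm_num) h2
      _ ≤ 2 ^ γ * (1 + |t| ^ γ) := by gcongr; linarith

lemma G_scale {γ ε : ℝ} (hγ : 1 < γ) (hε : 0 < ε) :
    Integrable (fun y : ℝ => 1 / (ε + |y - 1| ^ γ)) ∧
    ∫ y : ℝ, 1 / (ε + |y - 1| ^ γ) = ε ^ (1/γ - 1) * ∫ t : ℝ, 1 / (1 + |t| ^ γ) := by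
  have e : ∀ y : ℝ, 1 / (ε + |y| ^ γ) = ε⁻¹ * (1 / (1 + |ε ^ (-(1/γ)) * y| ^ γ)) := by
    intro y
    rw [abs_mul, Real.mul_rpow (abs_nonneg _) (abs_nonneg _), abs_of_pos (by positivity : 0 < ε ^ (-(1/γ))), ← Real.rpow_mul hε.le]
    have : -(1/γ) * γ = -1 := by field_simp
    rw [this, Real.rpow_neg_one]
    have : 0 ≤ |y| ^ γ := by positivity
    field_simp
  have hne : ε ^ (-(1/γ)) ≠ 0 := by positivity
  have hi := G_int hγ
  constructor
  · have h2 := ((hi.comp_mul_left' hne).const_mul ε⁻¹)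
    have h3 : Integrable (fun y : ℝ => 1 / (ε + |y| ^ γ)) := h2.congr (Eventually.of_forall fun y => (e y).symm)
    exact h3.comp_sub_right 1
  · rw [integral_sub_right_eq_self (fun y : ℝ => 1 / (ε + |y| ^ γ)) 1]
    simp_rw [e]
    rw [integral_const_mul, Measure.integral_comp_mul_left (fun t : ℝ => 1 / (1 + |t| ^ γ))]
    rw [smul_eq_mul, ← mul_assoc, abs_of_pos (by positivity)]
    congr 1
    rw [Real.rpow_neg hε.le, inv_inv, Real.rpow_sub hε, Real.rpow_one]
    field_simp

lemma J_est {d : ℕ} [NeZero d] {γ : ℝ} (hγ : 1 < γ) :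
    ∃ K, 0 < K ∧ ∀ ε, 0 < ε → ∀ A : Set (Rd d), MeasurableSet A → (∀ x ∈ A, 1/2 ≤ ‖x‖ ∧ ‖x‖ ≤ 3/2) →
      ∫⁻ x in A, ENNReal.ofReal (1 / (ε + |‖x‖ - 1| ^ γ)) ≤ ENNReal.ofReal (K * ε ^ (1/γ - 1)) := by
  have hB := Bv_pos d
  have hd : (0:ℝ) < d := by exact_mod_cast Nat.pos_of_ne_zero (NeZero.ne d)
  set G := ∫ t : ℝ, 1 / (1 + |t| ^ γ)
  have hG : 0 ≤ G := integral_nonneg fun t => by positivity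
  refine ⟨d * Bv d * (3/2) ^ (d-1) * (G + 1), by positivity, ?_⟩
  intro ε hε A hA hA2
  set f : ℝ → ℝ := fun y => 1 / (ε + |y - 1| ^ γ) with hf
  have hf0 : ∀ y, 0 ≤ f y := fun y => by simp only [hf]; positivity
  have hfm : Measurable f := by simp only [hf]; fun_prop
  have hfb : ∀ y, |f y| ≤ 1 / ε := by
    intro y; rw [abs_of_nonneg (hf0 y)]; simp only [hf]
    apply one_div_le_one_div_of_le hε
    have : 0 ≤ |y - 1| ^ γ := by positivity
    linarith
  have hi := polar_int (d := d) (a := 1/4) (b := 3/2) hfm (fun y _ => hfb y)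
  have h1 : ∫⁻ x in A, ENNReal.ofReal (f ‖x‖) ≤
      ∫⁻ x : Rd d, ENNReal.ofReal ((Set.Ioc (1/4) (3/2)).indicator f ‖x‖) := by
    rw [← lintegral_indicator hA]
    apply lintegral_mono
    intro x
    by_cases hx : x ∈ A
    · have := hA2 x hx
      simp only [hx, Set.indicator_of_mem]
      rw [Set.indicator_of_mem]
      exact ⟨by linarith, this.2⟩
    · simp [hx]
  refine h1.trans ?_
  rw [← ofReal_integral_eq_lintegral_ofReal hi (Eventually.of_forall fun x => Set.indicator_nonneg (fun y _ => hf0 y) _)]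
  apply ENNReal.ofReal_le_ofReal
  rw [polar (by norm_num) (by norm_num), mul_assoc, mul_assoc, mul_assoc, ]
  rw [mul_assoc]
  gcongr
  obtain ⟨hs1, hs2⟩ := G_scale hγ hε
  calc ∫ y in (1/4:ℝ)..(3/2), y ^ (d-1) * f y ≤ ∫ y in (1/4:ℝ)..(3/2), (3/2) ^ (d-1) * f y := by
        apply intervalIntegral.integral_mono_on (by norm_num)
        · exact (hs1.intervalIntegrable).continuousOn_mul (by fun_prop)
        · exact (hs1.intervalIntegrable).const_mul _
        · intro y hy
          have := hf0 y
          have : 0 ≤ y := by linarith [hy.1]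
          gcongr
          exact hy.2
    _ = (3/2) ^ (d-1) * ∫ y in (1/4:ℝ)..(3/2), f y := intervalIntegral.integral_const_mul _ _
    _ ≤ (3/2) ^ (d-1) * ((G+1) * ε ^ (1/γ - 1)) := by
        gcongr
        rw [intervalIntegral.integral_of_le (by norm_num)]
        refine (setIntegral_le_integral hs1 (Eventually.of_forall hf0)).trans ?_
        rw [hs2, mul_comm]
        gcongr
        linarith

def bet (d : ℕ) (p : ℝ) : ℝ := ((d:ℝ) - 1) - ha d * p

def Psi (β R : ℝ) : ℝ := 1 + (∫ y in (1:ℝ)..R, y ^ β) + R ^ (β + 1)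

lemma Psi_I_nonneg (β : ℝ) {R : ℝ} (hR : 1 ≤ R) : 0 ≤ ∫ y in (1:ℝ)..R, y ^ β :=
  intervalIntegral.integral_nonneg hR fun y hy => by
    have : 0 ≤ y := by linarith [hy.1]
    positivity

lemma L1_est {d : ℕ} (hd : 2 ≤ d) {p M M₀ T R : ℝ} {f : Rd d → ℂ} (hp : 2 < p) (hM : 1 ≤ M) (hM₀ : 0 ≤ M₀)
    (hT0 : 0 ≤ T) (hR : 1 ≤ R) (h1 : ∀ x, ‖f x‖ ≤ M₀)
    (h2 : ∀ x, x ≠ 0 → ‖f x‖ ≤ M * ‖x‖ ^ (-ha d) * M₀) (hT : eLpNorm f 2 volume ≤ ENNReal.ofReal T) :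
    ∫⁻ x, ‖f x‖ₑ ^ p ≤ ENNReal.ofReal
      (M ^ p * M₀ ^ p * ((1 + d) * Bv d) * (1 + ∫ y in (1:ℝ)..R, y ^ bet d p) +
        (M * R ^ (-ha d) * M₀) ^ (p-2) * T ^ 2) := by
  have : NeZero d := ⟨by omega⟩
  have hB := Bv_pos d
  have hd2 : (2:ℝ) ≤ d := by exact_mod_cast hd
  have ha0 : 0 ≤ ha d := by unfold ha; linarith
  rw [l2_iff hT0] at hT
  have hI0 := Psi_I_nonneg (bet d p) hR
  set I := ∫ y in (1:ℝ)..R, y ^ bet d p with hI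
  set φ : ℝ → ℝ := fun y => (M * M₀) ^ p * y ^ (-(ha d * p)) with hφ
  have hφ0 : ∀ y, 0 ≤ y → 0 ≤ φ y := fun y hy => by simp only [hφ]; positivity
  have hφi : Integrable (fun x : Rd d => (Set.Ioc 1 R).indicator φ ‖x‖) := by
    refine polar_int (B := (M * M₀) ^ p) (by simp only [hφ]; fun_prop) ?_
    intro y hy
    have hy0 : 0 ≤ y := by linarith [hy.1]
    rw [abs_of_nonneg (hφ0 y hy0)]
    simp only [hφ]
    have : y ^ (-(ha d * p)) ≤ 1 := Real.rpow_le_one_of_one_le_of_nonpos hy.1.le (by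
      have : 0 ≤ ha d * p := by positivity
      linarith)
    have h3 : 0 ≤ (M * M₀) ^ p := by positivity
    nlinarith
  have hφn : ∀ x : Rd d, 0 ≤ (Set.Ioc 1 R).indicator φ ‖x‖ := fun x =>
    Set.indicator_apply_nonneg fun _ => hφ0 _ (norm_nonneg _)
  have e2 : ∫⁻ x : Rd d, ENNReal.ofReal ((Set.Ioc 1 R).indicator φ ‖x‖) =
      ENNReal.ofReal (d * Bv d * ((M * M₀) ^ p * I)) := by
    rw [← ofReal_integral_eq_lintegral_ofReal hφi (Eventually.of_forall hφn), polar zero_le_one hR,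
      hI, ← intervalIntegral.integral_const_mul ((M * M₀) ^ p)]
    congr 2
    apply intervalIntegral.integral_congr
    intro y hy
    rw [Set.uIcc_of_le hR] at hy
    have hy0 : 0 < y := by linarith [hy.1]
    simp only [hφ, bet]
    rw [sub_eq_add_neg (_ - _), Real.rpow_add hy0]
    have : y ^ ((d:ℝ) - 1) = y ^ (d - 1) := by
      rw [← Real.rpow_natCast, Nat.cast_sub (by omega), Nat.cast_one]
    rw [this]; ring
  have e1 : ∫⁻ x : Rd d, (Metric.closedBall (0 : Rd d) 1).indicator (fun _ => ENNReal.ofReal (M₀ ^ p)) x =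
      ENNReal.ofReal (M₀ ^ p * Bv d) := by
    rw [lintegral_indicator_const measurableSet_closedBall, ENNReal.ofReal_mul (by positivity)]
    congr 1
    rw [Measure.addHaar_closedBall_eq_addHaar_ball]
    simp only [Bv, bm, Measure.real, Measure.restrict_apply_univ]
    rw [ENNReal.ofReal_toReal measure_ball_lt_top.ne]
  have hpt : ∀ x : Rd d, ‖f x‖ₑ ^ p ≤
      (Metric.closedBall (0 : Rd d) 1).indicator (fun _ => ENNReal.ofReal (M₀ ^ p)) x +
      (ENNReal.ofReal ((Set.Ioc 1 R).indicator φ ‖x‖) +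
        ENNReal.ofReal ((M * R ^ (-ha d) * M₀) ^ (p-2)) * ‖f x‖ₑ ^ 2) := by
    intro x
    rw [← ofReal_norm, ENNReal.ofReal_rpow_of_nonneg (norm_nonneg _) (by linarith)]
    rcases le_or_gt ‖x‖ 1 with hx | hx
    · refine le_add_right ?_
      rw [Set.indicator_of_mem (by simpa using hx)]
      apply ENNReal.ofReal_le_ofReal
      have := h1 x
      gcongr
    · have hx0 : x ≠ 0 := by rintro rfl; simp at hx; linarith
      have hb := h2 x hx0
      refine le_add_left ?_
      rcases le_or_gt ‖x‖ R with hxR | hxR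
      · refine le_add_right ?_
        rw [Set.indicator_of_mem (by exact ⟨hx, hxR⟩)]
        apply ENNReal.ofReal_le_ofReal
        have : φ ‖x‖ = (M * ‖x‖ ^ (-ha d) * M₀) ^ p := by
          simp only [hφ]
          rw [mul_right_comm M, Real.mul_rpow (x := M * M₀) (by positivity) (by positivity), ← Real.rpow_mul (by positivity)]
          congr 2; ring
        rw [this]
        gcongr
      · refine le_add_left ?_
        rw [← ENNReal.ofReal_pow (norm_nonneg _), ← ENNReal.ofReal_mul (by positivity)]
        apply ENNReal.ofReal_le_ofReal
        have : ‖f x‖ ^ p = ‖f x‖ ^ (p-2) * ‖f x‖ ^ 2 := by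
          rw [← Real.rpow_natCast, ← Real.rpow_add_of_nonneg (norm_nonneg _) (by linarith) (by norm_num)]
          norm_num
        rw [this]
        have h3 : ‖x‖ ^ (-ha d) ≤ R ^ (-ha d) := Real.rpow_le_rpow_of_nonpos (by linarith) hxR.le (by linarith)
        have h4 : ‖f x‖ ≤ M * R ^ (-ha d) * M₀ := hb.trans (by gcongr)
        gcongr
  calc ∫⁻ x, ‖f x‖ₑ ^ p ≤ ∫⁻ x, ((Metric.closedBall (0 : Rd d) 1).indicator (fun _ => ENNReal.ofReal (M₀ ^ p)) x +
      (ENNReal.ofReal ((Set.Ioc 1 R).indicator φ ‖x‖) +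
        ENNReal.ofReal ((M * R ^ (-ha d) * M₀) ^ (p-2)) * ‖f x‖ₑ ^ 2)) := lintegral_mono hpt
    _ = ENNReal.ofReal (M₀ ^ p * Bv d) + (ENNReal.ofReal (d * Bv d * ((M * M₀) ^ p * I)) +
        ENNReal.ofReal ((M * R ^ (-ha d) * M₀) ^ (p-2)) * ∫⁻ x, ‖f x‖ₑ ^ 2) := by
        rw [lintegral_add_left (measurable_const.indicator measurableSet_closedBall), e1,
          lintegral_add_left' hφi.1.aemeasurable.ennreal_ofReal, e2, lintegral_const_mul' _ _ ENNReal.ofReal_ne_top]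
    _ ≤ ENNReal.ofReal (M₀ ^ p * Bv d) + (ENNReal.ofReal (d * Bv d * ((M * M₀) ^ p * I)) +
        ENNReal.ofReal ((M * R ^ (-ha d) * M₀) ^ (p-2)) * ENNReal.ofReal (T ^ 2)) := by gcongr
    _ = ENNReal.ofReal (M₀ ^ p * Bv d + (d * Bv d * ((M * M₀) ^ p * I) +
        (M * R ^ (-ha d) * M₀) ^ (p-2) * T ^ 2)) := by
        rw [← ENNReal.ofReal_mul (by positivity), ← ENNReal.ofReal_add (by positivity) (by positivity),
          ← ENNReal.ofReal_add (by positivity) (by positivity)]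
    _ ≤ _ := by
        apply ENNReal.ofReal_le_ofReal
        rw [← add_assoc]
        gcongr
        rw [Real.mul_rpow (by linarith) hM₀]
        have hMp : 1 ≤ M ^ p := Real.one_le_rpow hM (by linarith)
        have hX : 0 ≤ M₀ ^ p * Bv d := by positivity
        have hY : 0 ≤ M ^ p * M₀ ^ p * Bv d * d := by positivity
        have hZ : 0 ≤ M ^ p * M₀ ^ p * Bv d * I := by positivity
        nlinarith [mul_le_mul_of_nonneg_right hMp hX]

lemma adm_upper {s γ c C ε r : ℝ} {g : ℝ → ℝ → ℝ} (h : IsAdmissible s γ c C g) (hs : 0 < s) (hγ : 1 < γ)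
    (hC : 0 < C) (hε : ε ∈ Set.Ioo (0:ℝ) 1) (hr : 0 ≤ r) : g ε r ≤ 2 * C * (1 + r ^ 2) ^ s := by
  have h1 : 1 ≤ (1 + r ^ 2) ^ s := Real.one_le_rpow (by nlinarith) hs.le
  rcases le_total (1/2) |r - 1| with h' | h'
  · refine ((h.2.2.1 ε hε r h').2).trans ?_
    have h2 : |r| ^ (2 * s) ≤ (1 + r ^ 2) ^ s := by
      rw [abs_of_nonneg hr, Real.rpow_mul hr]
      gcongr
      norm_num
    nlinarith
  · refine ((h.2.2.2 ε hε r h').2).trans ?_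
    have h2 : |r - 1| ^ γ ≤ 1 := Real.rpow_le_one (abs_nonneg _) (by linarith) (by linarith)
    have := hε.2
    nlinarith

lemma adm_int {d : ℕ} {s γ c C ε : ℝ} {g : ℝ → ℝ → ℝ} (h : IsAdmissible s γ c C g) (hs : 0 < s) (hγ : 1 < γ)
    (hC : 0 < C) (hε : ε ∈ Set.Ioo (0:ℝ) 1) (u : HsFn d s) :
    Integrable (fun ξ : Rd d => ‖u.ft ξ‖ ^ 2 * g ε ‖ξ‖) := by
  refine (u.memHs.const_mul (2 * C)).mono ?_ (Eventually.of_forall fun ξ => ?_)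
  · have := u.ft_memL2.1
    have h2 := ((h.1 ε hε).comp (measurable_norm (α := Rd d))).aestronglyMeasurable (μ := volume)
    exact (this.norm.pow 2).mul h2
  · have h1 := (h.2.1 ε hε ‖ξ‖).le
    rw [Real.norm_of_nonneg (by positivity), Real.norm_of_nonneg (by positivity)]
    have := adm_upper h hs hγ hC hε (norm_nonneg ξ)
    calc ‖u.ft ξ‖ ^ 2 * g ε ‖ξ‖ ≤ ‖u.ft ξ‖ ^ 2 * (2 * C * (1 + ‖ξ‖ ^ 2) ^ s) := by gcongr
      _ = _ := by ring

lemma q_lint {d : ℕ} {s γ c C ε : ℝ} {g : ℝ → ℝ → ℝ} (h : IsAdmissible s γ c C g) (hs : 0 < s) (hγ : 1 < γ)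
    (hC : 0 < C) (hε : ε ∈ Set.Ioo (0:ℝ) 1) (u : HsFn d s) :
    ∫⁻ ξ, ‖u.ft ξ‖ₑ ^ 2 * ENNReal.ofReal (g ε ‖ξ‖) = ENNReal.ofReal (qeps (g ε) u) := by
  rw [qeps, ofReal_integral_eq_lintegral_ofReal (adm_int h hs hγ hC hε u)
    (Eventually.of_forall fun ξ => by have := (h.2.1 ε hε ‖ξ‖).le; positivity)]
  congr 1; ext ξ
  rw [ENNReal.ofReal_mul (by positivity), ENNReal.ofReal_pow (norm_nonneg _), ofReal_norm]

lemma q_nonneg {d : ℕ} {s γ c C ε : ℝ} {g : ℝ → ℝ → ℝ} (h : IsAdmissible s γ c C g)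
    (hε : ε ∈ Set.Ioo (0:ℝ) 1) (u : HsFn d s) : 0 ≤ qeps (g ε) u :=
  integral_nonneg fun ξ => by have := (h.2.1 ε hε ‖ξ‖).le; positivity

/-- annulus -/
def AA (d : ℕ) : Set (Rd d) := {ξ | |‖ξ‖ - 1| ≤ 1/2}

lemma AA_meas (d : ℕ) : MeasurableSet (AA d) :=
  measurableSet_le (by fun_prop) (by fun_prop)

lemma u1_l2 {d : ℕ} {s γ c C ε : ℝ} {g : ℝ → ℝ → ℝ} (h : IsAdmissible s γ c C g) (hs : 0 < s) (hγ : 1 < γ)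
    (hc : 0 < c) (hC : 0 < C) (hε : ε ∈ Set.Ioo (0:ℝ) 1) (u : HsFn d s) :
    eLpNorm ((AA d).indicator u.ft) 2 volume ≤ ENNReal.ofReal (√(qeps (g ε) u / (c * ε))) := by
  have hq := q_nonneg h hε u
  have hε0 := hε.1
  rw [l2_iff (by positivity), Real.sq_sqrt (by positivity)]
  calc ∫⁻ ξ, ‖(AA d).indicator u.ft ξ‖ₑ ^ 2
      ≤ ∫⁻ ξ, ENNReal.ofReal (1 / (c * ε)) * (‖u.ft ξ‖ₑ ^ 2 * ENNReal.ofReal (g ε ‖ξ‖)) := by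
        apply lintegral_mono
        intro ξ
        dsimp only
        by_cases hξ : ξ ∈ AA d
        · rw [Set.indicator_of_mem hξ, mul_left_comm, ← ENNReal.ofReal_mul (by positivity)]
          nth_rewrite 1 [← mul_one (‖u.ft ξ‖ₑ ^ 2)]
          gcongr
          rw [ENNReal.one_le_ofReal, one_div_mul_eq_div, one_le_div (by positivity)]
          refine le_trans ?_ (h.2.2.2 ε hε ‖ξ‖ hξ).1
          gcongr
          have : 0 ≤ |‖ξ‖ - 1| ^ γ := by positivity
          linarith
        · simp [hξ]
    _ = ENNReal.ofReal (1 / (c * ε)) * ENNReal.ofReal (qeps (g ε) u) := by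
        rw [lintegral_const_mul' _ _ ENNReal.ofReal_ne_top, q_lint h hs hγ hC hε]
    _ = _ := by
        rw [← ENNReal.ofReal_mul (by positivity)]; congr 1; ring

lemma u1_l1 {d : ℕ} (hd : 2 ≤ d) {s γ c C : ℝ} (hs : 0 < s) (hγ : 1 < γ)
    (hc : 0 < c) (hC : 0 < C) : ∃ K, 0 < K ∧ ∀ (g : ℝ → ℝ → ℝ) (ε : ℝ), IsAdmissible s γ c C g →
      ε ∈ Set.Ioo (0:ℝ) 1 → ∀ (u : HsFn d s),
      Integrable ((AA d).indicator u.ft) ∧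
      ∫ ξ, ‖(AA d).indicator u.ft ξ‖ ≤ √(qeps (g ε) u * K * ε ^ (1/γ - 1)) := by
  have : NeZero d := ⟨by omega⟩
  obtain ⟨K, hK, hJ⟩ := J_est (d := d) hγ
  refine ⟨K / c, by positivity, ?_⟩
  intro g ε h hε u
  have hq := q_nonneg h hε u
  have hε0 := hε.1
  have hJ' := hJ ε hε0 (AA d) (AA_meas d) (fun x hx => by
    have := abs_le.mp (show |‖x‖ - 1| ≤ 1/2 from hx)
    constructor <;> linarith [this.1, this.2])
  have hm : AEMeasurable (fun ξ => ‖u.ft ξ‖ₑ * ENNReal.ofReal (√(g ε ‖ξ‖))) volume := by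
    have := u.ft_memL2.1.enorm
    exact this.mul ((h.1 ε hε).comp measurable_norm).sqrt.ennreal_ofReal.aemeasurable
  have hm2 : AEMeasurable ((AA d).indicator fun ξ => ENNReal.ofReal (1 / √(g ε ‖ξ‖))) volume := by
    refine AEMeasurable.indicator ?_ (AA_meas d)
    have : Measurable (fun ξ : Rd d => g ε ‖ξ‖) := (h.1 ε hε).comp measurable_norm
    exact (this.sqrt.const_div 1).ennreal_ofReal.aemeasurable
  have hH := ENNReal.lintegral_mul_le_Lp_mul_Lq volume Real.HolderConjugate.two_two hm hm2
  have hgp : ∀ ξ : Rd d, 0 < g ε ‖ξ‖ := fun ξ => h.2.1 ε hε _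
  have hmain : ∫⁻ ξ, ‖(AA d).indicator u.ft ξ‖ₑ ≤ ENNReal.ofReal √(qeps (g ε) u * (K / c) * ε ^ (1/γ - 1)) := by
    calc ∫⁻ ξ, ‖(AA d).indicator u.ft ξ‖ₑ = ∫⁻ ξ, ((fun ξ => ‖u.ft ξ‖ₑ * ENNReal.ofReal (√(g ε ‖ξ‖))) *
            ((AA d).indicator fun ξ => ENNReal.ofReal (1 / √(g ε ‖ξ‖)))) ξ := by
          congr 1; ext ξ
          by_cases hξ : ξ ∈ AA d
          · simp only [Pi.mul_apply, Set.indicator_of_mem hξ]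
            have := Real.sqrt_pos.mpr (hgp ξ)
            rw [mul_assoc, ← ENNReal.ofReal_mul (by positivity), mul_one_div_cancel this.ne']
            simp
          · simp [hξ]
      _ ≤ _ := hH
      _ ≤ (ENNReal.ofReal (qeps (g ε) u)) ^ (1/2:ℝ) * (ENNReal.ofReal ((K/c) * ε ^ (1/γ - 1))) ^ (1/2:ℝ) := by
          gcongr
          · rw [← q_lint h hs hγ hC hε]
            refine lintegral_mono fun ξ => ?_
            dsimp only
            rw [ENNReal.rpow_two, mul_pow, ← ENNReal.ofReal_pow (by positivity), Real.sq_sqrt (hgp ξ).le]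
          · calc ∫⁻ ξ, (AA d).indicator (fun ξ => ENNReal.ofReal (1 / √(g ε ‖ξ‖))) ξ ^ (2:ℝ)
                ≤ ∫⁻ ξ, (AA d).indicator (fun ξ => ENNReal.ofReal (1/c) * ENNReal.ofReal (1 / (ε + |‖ξ‖ - 1| ^ γ))) ξ := by
                  refine lintegral_mono fun ξ => ?_
                  by_cases hξ : ξ ∈ AA d
                  · simp only [Set.indicator_of_mem hξ]
                    rw [ENNReal.rpow_two, ← ENNReal.ofReal_pow (by positivity), div_pow, Real.sq_sqrt (hgp ξ).le,
                      ← ENNReal.ofReal_mul (by positivity)]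
                    apply ENNReal.ofReal_le_ofReal
                    have h0 : 0 ≤ |‖ξ‖ - 1| ^ γ := by positivity
                    rw [one_pow, one_div_mul_one_div]
                    exact one_div_le_one_div_of_le (by positivity) (h.2.2.2 ε hε ‖ξ‖ hξ).1
                  · simp [hξ]
              _ = ENNReal.ofReal (1/c) * ∫⁻ x in AA d, ENNReal.ofReal (1 / (ε + |‖x‖ - 1| ^ γ)) := by
                  rw [lintegral_indicator (AA_meas d), lintegral_const_mul' _ _ ENNReal.ofReal_ne_top]
              _ ≤ ENNReal.ofReal (1/c) * ENNReal.ofReal (K * ε ^ (1/γ - 1)) := by gcongr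
              _ = _ := by rw [← ENNReal.ofReal_mul (by positivity)]; congr 1; ring
      _ = _ := by
          rw [← ENNReal.mul_rpow_of_nonneg _ _ (by norm_num), ← ENNReal.ofReal_mul hq,
            ENNReal.ofReal_rpow_of_nonneg (by positivity) (by norm_num), Real.sqrt_eq_rpow, mul_assoc]
  have hi : Integrable ((AA d).indicator u.ft) :=
    ⟨(u.ft_memL2.1).indicator (AA_meas d), hmain.trans_lt ENNReal.ofReal_lt_top⟩
  refine ⟨hi, ?_⟩
  rw [integral_norm_eq_lintegral_enorm hi.1]
  exact ENNReal.toReal_le_of_le_ofReal (by positivity) hmain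

lemma u1_rad {d : ℕ} {s : ℝ} (u : HsFn d s) (hr : Radial u.toFun) :
    Radial (𝓕⁻ ((AA d).indicator u.ft)) := by
  apply inv_radial
  intro R
  filter_upwards [ft_radial u.ft_memL2 hr u.isFT R] with x hx
  have : R x ∈ AA d ↔ x ∈ AA d := by simp [AA]
  by_cases h : x ∈ AA d
  · rw [Set.indicator_of_mem h, Set.indicator_of_mem (this.mpr h)]; exact hx
  · rw [Set.indicator_of_notMem h, Set.indicator_of_notMem (fun h' => h (this.mp h'))]

lemma real_est {d : ℕ} {p M Y T R k k2 I : ℝ} (hp : 2 < p) (hM : 1 ≤ M) (hY : 0 ≤ Y) (hk : 0 < k) (hk2 : 0 < k2)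
    (hR : 1 ≤ R) (hI : 0 ≤ I) (hT : T ^ 2 = Y * R * k2) :
    M ^ p * √Y ^ p * k * (1 + I) + (M * R ^ (-ha d) * √Y) ^ (p-2) * T ^ 2 ≤
      √((M ^ p * k + M ^ p * k2) ^ (2/p) * Y * (1 + I + R ^ (bet d p + 1)) ^ (2/p)) ^ p := by
  have hR0 : 0 < R := by linarith
  have hM0 : 0 < M := by linarith
  have hsq : ∀ Z : ℝ, 0 ≤ Z → √Z ^ p = Z ^ (p/2) := by
    intro Z hZ
    rw [Real.sqrt_eq_rpow, ← Real.rpow_mul hZ]; congr 1; ring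
  have hsq2 : √Y ^ (p-2) = Y ^ (p/2 - 1) := by
    rw [Real.sqrt_eq_rpow, ← Real.rpow_mul hY]; congr 1; ring
  have e1 : (M * R ^ (-ha d) * √Y) ^ (p-2) * T ^ 2 = M ^ (p-2) * Y ^ (p/2) * (k2 * R ^ (bet d p + 1)) := by
    rw [Real.mul_rpow (by positivity) (by positivity), Real.mul_rpow (by positivity) (by positivity), hsq2,
      ← Real.rpow_mul hR0.le, hT]
    have a1 : Y ^ (p/2) = Y ^ (p/2 - 1) * Y := by
      nth_rewrite 3 [← Real.rpow_one Y]
      rw [← Real.rpow_add_of_nonneg hY (by linarith) zero_le_one]; congr 1; ring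
    have a2 : R ^ (bet d p + 1) = R ^ (-ha d * (p-2)) * R := by
      nth_rewrite 3 [← Real.rpow_one R]
      rw [← Real.rpow_add hR0]; congr 1
      unfold bet ha; ring
    rw [a1, a2]; ring
  have hb : 0 < R ^ (bet d p + 1) := by positivity
  rw [e1, hsq Y hY, hsq _ (by positivity), Real.mul_rpow (by positivity) (by positivity),
    Real.mul_rpow (by positivity) (by positivity), ← Real.rpow_mul (by positivity), ← Real.rpow_mul (by positivity)]
  have : 2 / p * (p / 2) = 1 := by field_simp
  rw [this, Real.rpow_one, Real.rpow_one]
  have hMM : M ^ (p-2) ≤ M ^ p := Real.rpow_le_rpow_of_exponent_le hM (by linarith)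
  have h1 : M ^ (p-2) * Y ^ (p/2) * (k2 * R ^ (bet d p + 1)) ≤ M ^ p * Y ^ (p/2) * (k2 * R ^ (bet d p + 1)) := by
    gcongr
  refine (add_le_add le_rfl h1).trans ?_
  have h2 : 0 ≤ M ^ p * Y ^ (p/2) * k * R ^ (bet d p + 1) := by positivity
  have h3 : 0 ≤ M ^ p * Y ^ (p/2) * k2 * (1 + I) := by positivity
  nlinarith

lemma u1_lp {d : ℕ} (hd : 2 ≤ d) {s γ p c C : ℝ} (hs : 0 < s) (hγ : 1 < γ) (hp : 2 < p)
    (hc : 0 < c) (hC : 0 < C) : ∃ K, 0 < K ∧ ∀ (g : ℝ → ℝ → ℝ) (ε : ℝ), IsAdmissible s γ c C g →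
      ε ∈ Set.Ioo (0:ℝ) 1 → ∀ (u : HsFn d s), Radial u.toFun →
      Integrable ((AA d).indicator u.ft) ∧
      eLpNorm (𝓕⁻ ((AA d).indicator u.ft)) (ENNReal.ofReal p) volume ≤ ENNReal.ofReal
        (√(K * (qeps (g ε) u * ε ^ (1/γ - 1) * Psi (bet d p) (ε ^ (-(1/γ))) ^ (2/p)))) := by
  have : NeZero d := ⟨by omega⟩
  obtain ⟨K1, hK1, hl1⟩ := u1_l1 hd hs hγ hc hC
  obtain ⟨M, hM, hdec⟩ := decay hd
  have hB := Bv_pos d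
  set k : ℝ := (1 + d) * Bv d with hk
  have hk0 : 0 < k := by positivity
  have hM0 : 0 < M := by linarith
  set k2 : ℝ := 1 / (K1 * c)
  have hk2 : 0 < k2 := by positivity
  refine ⟨(M ^ p * k + M ^ p * k2) ^ (2/p) * K1, by positivity, ?_⟩
  intro g ε h hε u hr
  obtain ⟨hi, hb⟩ := hl1 g ε h hε u
  refine ⟨hi, ?_⟩
  have hε0 := hε.1
  have hq := q_nonneg h hε u
  set Q := qeps (g ε) u
  set R := ε ^ (-(1/γ)) with hR
  have hR1 : 1 ≤ R := Real.one_le_rpow_of_pos_of_le_one_of_nonpos hε0 hε.2.le (by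
    have : 0 < 1/γ := by positivity
    linarith)
  set Y := Q * K1 * ε ^ (1/γ - 1) with hY
  have hY0 : 0 ≤ Y := by positivity
  have hL2 : MemLp ((AA d).indicator u.ft) 2 volume := u.ft_memL2.indicator (AA_meas d)
  have hpl := plancherel hL2 (memLp_inv hi hL2) (isFT_inv hi)
  have hI := Psi_I_nonneg (bet d p) hR1
  have hest := L1_est hd (R := R) (M := M) (M₀ := √Y) (T := √(Q / (c * ε))) (f := 𝓕⁻ ((AA d).indicator u.ft)) hp hM
    (by positivity) (by positivity) hR1 (fun x => (inv_norm_le _ x).trans hb)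
    (fun x hx => (hdec _ hi (u1_rad u hr) (fun ξ hξ => by
        rw [Set.indicator_of_notMem]
        intro h'
        have := (abs_le.mp (show |‖ξ‖ - 1| ≤ 1/2 from h')).1
        linarith) x hx).trans (by gcongr))
    (hpl.trans_le (u1_l2 h hs hγ hc hC hε u))
  have hT : √(Q / (c * ε)) ^ 2 = Y * R * k2 := by
    rw [Real.sq_sqrt (by positivity)]
    simp only [hY, hR, k2]
    rw [Real.rpow_sub hε0, Real.rpow_one, Real.rpow_neg hε0.le]
    field_simp
  rw [lp_iff (by linarith) (by positivity)]
  refine hest.trans (ENNReal.ofReal_le_ofReal ?_)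
  refine (real_est hp hM hY0 hk0 hk2 hR1 hI hT).trans (le_of_eq ?_)
  congr 2
  simp only [hY, Psi]
  ring

lemma Psi_ge_one (β : ℝ) {R : ℝ} (hR : 1 ≤ R) : 1 ≤ Psi β R := by
  have := Psi_I_nonneg β hR
  have : 0 < R ^ (β+1) := by positivity
  unfold Psi; linarith

lemma lower {d : ℕ} (hd : 2 ≤ d) {s γ p c C : ℝ} (hs : 0 < s) (hγ : 1 < γ) (hp : 2 < p)
    (hps : s < (d : ℝ) / 2 → p < 2 * (d : ℝ) / ((d : ℝ) - 2 * s))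
    (hc : 0 < c) (hC : 0 < C) : ∃ K, 0 < K ∧ ∀ (g : ℝ → ℝ → ℝ) (ε : ℝ), IsAdmissible s γ c C g →
      ε ∈ Set.Ioo (0:ℝ) 1 → ∀ t ∈ RayleighSet d s p (g ε) Radial,
        1 ≤ K * t * (ε ^ (1/γ - 1) * Psi (bet d p) (ε ^ (-(1/γ))) ^ (2/p)) := by
  obtain ⟨K1, hK1, h1⟩ := u1_lp hd hs hγ hp hc hC
  obtain ⟨K2, hK2, h2⟩ := sobolev hd hs hp hps
  set k3 : ℝ := 2 ^ s / c with hk3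
  have hk30 : 0 < k3 := by positivity
  refine ⟨2 * (K1 + K2 ^ 2 * k3), by positivity, ?_⟩
  rintro g ε h hε t ⟨u, hr, hne, hmem, rfl⟩
  obtain ⟨hi, hb⟩ := h1 g ε h hε u hr
  have hq := q_nonneg h hε u
  have hε0 := hε.1
  set Q := qeps (g ε) u with hQ
  have hR1 : 1 ≤ ε ^ (-(1/γ)) := Real.one_le_rpow_of_pos_of_le_one_of_nonpos hε0 hε.2.le (by
    have : 0 < 1/γ := by positivity
    linarith)
  have hE1 : 1 ≤ ε ^ (1/γ - 1) := Real.one_le_rpow_of_pos_of_le_one_of_nonpos hε0 hε.2.le (by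
    have : 1/γ < 1 := by rw [div_lt_one (by linarith)]; exact hγ
    linarith)
  have hP1 : 1 ≤ Psi (bet d p) (ε ^ (-(1/γ))) ^ (2/p) :=
    Real.one_le_rpow (Psi_ge_one _ hR1) (by positivity)
  set E := ε ^ (1/γ - 1)
  set P := Psi (bet d p) (ε ^ (-(1/γ))) ^ (2/p)
  set U1 := (AA d).indicator u.ft with hU1
  have hL2 : MemLp U1 2 volume := u.ft_memL2.indicator (AA_meas d)
  have hu1 := memLp_inv hi hL2
  have hN : ∫⁻ ξ, ‖u.ft ξ - U1 ξ‖ₑ ^ 2 * ENNReal.ofReal ((1 + ‖ξ‖ ^ 2) ^ s) ≤ ENNReal.ofReal (√(k3 * Q) ^ 2) := by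
    rw [Real.sq_sqrt (by positivity), ENNReal.ofReal_mul hk30.le, hQ, ← q_lint h hs hγ hC hε,
      ← lintegral_const_mul' _ _ ENNReal.ofReal_ne_top]
    refine lintegral_mono fun ξ => ?_
    dsimp only
    by_cases hξ : ξ ∈ AA d
    · simp [hU1, hξ]
    · rw [hU1, Set.indicator_of_notMem hξ, sub_zero, mul_left_comm, ← ENNReal.ofReal_mul hk30.le]
      gcongr
      have hξ' : 1/2 ≤ |‖ξ‖ - 1| := by
        simp only [AA, Set.mem_ofPred_eq, not_le] at hξ; exact hξ.le
      have h3 := (h.2.2.1 ε hε ‖ξ‖ hξ').1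
      rw [abs_norm] at h3
      have h4 : (1 + ‖ξ‖ ^ 2) ^ s ≤ 2 ^ s * (1 + ‖ξ‖ ^ (2 * s)) := by
        have hp2 : (0:ℝ) < 2 ^ s := by positivity
        have hn : 0 ≤ ‖ξ‖ ^ (2*s) := by positivity
        rcases le_total ‖ξ‖ 1 with h5 | h5
        · calc (1 + ‖ξ‖ ^ 2) ^ s ≤ (2:ℝ) ^ s := by gcongr; nlinarith [norm_nonneg ξ]
            _ ≤ _ := by nlinarith
        · calc (1 + ‖ξ‖ ^ 2) ^ s ≤ (2 * ‖ξ‖ ^ 2) ^ s := by gcongr; nlinarith [norm_nonneg ξ]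
            _ = 2 ^ s * ‖ξ‖ ^ (2 * s) := by
              rw [Real.mul_rpow (by norm_num) (by positivity), Real.rpow_mul (norm_nonneg _)]; norm_num
            _ ≤ _ := by nlinarith
      calc (1 + ‖ξ‖ ^ 2) ^ s ≤ 2 ^ s * (1 + ‖ξ‖ ^ (2 * s)) := h4
        _ = k3 * (c * (1 + ‖ξ‖ ^ (2 * s))) := by rw [hk3]; field_simp
        _ ≤ _ := by gcongr
  have hb2 := h2 (fun ξ => u.ft ξ - U1 ξ) (fun x => u.toFun x - 𝓕⁻ U1 x) _ (u.ft_memL2.sub hL2) (u.memL2.sub hu1)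
    (isFT_sub u.ft_memL2 u.memL2 hL2 hu1 u.isFT (isFT_inv hi)) (Real.sqrt_nonneg _) hN
  have hsum : eLpNorm u.toFun (ENNReal.ofReal p) volume ≤ ENNReal.ofReal (√(K1 * (Q * E * P)) + K2 * √(k3 * Q)) := by
    have e : u.toFun = 𝓕⁻ U1 + fun x => u.toFun x - 𝓕⁻ U1 x := by ext x; simp
    rw [e, ENNReal.ofReal_add (by positivity) (by positivity)]
    refine (eLpNorm_add_le hu1.1 (u.memL2.sub hu1).1 ?_).trans (add_le_add hb hb2)
    rw [ENNReal.one_le_ofReal]; linarith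
  have hL : LpN p u.toFun ≤ √(K1 * (Q * E * P)) + K2 * √(k3 * Q) :=
    ENNReal.toReal_le_of_le_ofReal (by positivity) hsum
  have hpos : 0 < LpN p u.toFun := by
    refine ENNReal.toReal_pos ?_ hmem.2.ne
    intro h0
    rw [eLpNorm_eq_zero_iff hmem.1 (by simp; linarith)] at h0
    exact hne h0
  have hsq : LpN p u.toFun ^ 2 ≤ 2 * (K1 + K2 ^ 2 * k3) * Q * (E * P) := by
    have hs1 := Real.sq_sqrt (show 0 ≤ K1 * (Q * E * P) by positivity)
    have hs2 := Real.sq_sqrt (show 0 ≤ k3 * Q by positivity)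
    have hEP : 1 ≤ E * P := by nlinarith
    calc LpN p u.toFun ^ 2 ≤ (√(K1 * (Q * E * P)) + K2 * √(k3 * Q)) ^ 2 := by gcongr
      _ ≤ 2 * (√(K1 * (Q * E * P)) ^ 2 + (K2 * √(k3 * Q)) ^ 2) := by
        nlinarith [sq_nonneg (√(K1 * (Q * E * P)) - K2 * √(k3 * Q))]
      _ = 2 * (K1 * (Q * E * P) + K2 ^ 2 * k3 * Q * 1) := by rw [mul_pow, hs1, hs2]; ring
      _ ≤ 2 * (K1 * (Q * E * P) + K2 ^ 2 * k3 * Q * (E * P)) := by gcongr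
      _ = _ := by ring
  rw [show 2 * (K1 + K2 ^ 2 * k3) * (Q / LpN p u.toFun ^ 2) * (E * P) =
    (2 * (K1 + K2 ^ 2 * k3) * Q * (E * P)) / LpN p u.toFun ^ 2 by ring, one_le_div (by positivity)]
  exact hsq

lemma holder_rad {d : ℕ} (hd : 2 ≤ d) {p b R : ℝ} {h : ℝ → ℝ} {u : Rd d → ℂ} (hp : 2 < p) (hb : 0 ≤ b) (hR : 1 ≤ R)
    (hh : Continuous h) (hu : ∀ x, u x = (h ‖x‖ : ℝ)) (hm : MemLp u (ENNReal.ofReal p) volume) :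
    d * Bv d * ∫ y in (1:ℝ)..R, y ^ (d-1) * (h y ^ 2 * y ^ (-b)) ≤
      LpN p u ^ 2 * (d * Bv d * ∫ y in (1:ℝ)..R, y ^ (d-1) * y ^ (-(b * (p / (p-2))))) ^ (1 - 2/p) := by
  have : NeZero d := ⟨by omega⟩
  have hB := Bv_pos d
  have hp2 : 0 < p - 2 := by linarith
  set q := p / (p-2) with hq
  have hq0 : 0 < q := by positivity
  have hconj : (p/2).HolderConjugate q := by
    rw [Real.holderConjugate_iff]
    refine ⟨by linarith, ?_⟩
    rw [hq]; field_simp; ring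
  obtain ⟨B, hBb⟩ := (isCompact_Icc (a := (1:ℝ)) (b := R)).exists_bound_of_continuousOn (f := fun y => h y ^ 2) (by fun_prop)
  have hw1 : ∀ c' : ℝ, 0 ≤ c' → ∀ y ∈ Set.Ioc 1 R, 0 ≤ y ^ (-c') ∧ y ^ (-c') ≤ 1 := by
    intro c' hc' y hy
    have : 0 ≤ y := by linarith [hy.1]
    exact ⟨by positivity, Real.rpow_le_one_of_one_le_of_nonpos hy.1.le (by linarith)⟩
  set F : ℝ → ℝ := fun y => h y ^ 2 * y ^ (-b) with hF
  set W : ℝ → ℝ := fun y => y ^ (-b) with hW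
  set W' : ℝ → ℝ := fun y => y ^ (-(b * q)) with hW'
  have hFi : Integrable (fun x : Rd d => (Set.Ioc 1 R).indicator F ‖x‖) := by
    refine polar_int (B := B) (by have := hh.measurable; simp only [hF]; fun_prop) ?_
    intro y hy
    obtain ⟨a1, a2⟩ := hw1 b hb y hy
    have a3 := hBb y ⟨hy.1.le, hy.2⟩
    rw [Real.norm_eq_abs] at a3
    simp only [hF]
    rw [abs_mul, abs_of_nonneg a1]
    have := abs_nonneg (h y ^ 2)
    nlinarith
  have hWi : Integrable (fun x : Rd d => (Set.Ioc 1 R).indicator W' ‖x‖) := by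
    refine polar_int (B := 1) (by simp only [hW']; fun_prop) ?_
    intro y hy
    obtain ⟨a1, a2⟩ := hw1 (b*q) (by positivity) y hy
    simp only [hW']
    rwa [abs_of_nonneg a1]
  have hFn : ∀ x : Rd d, 0 ≤ (Set.Ioc 1 R).indicator F ‖x‖ := fun x =>
    Set.indicator_apply_nonneg fun _ => by simp only [hF]; positivity
  have hWn : ∀ x : Rd d, 0 ≤ (Set.Ioc 1 R).indicator W' ‖x‖ := fun x =>
    Set.indicator_apply_nonneg fun _ => by simp only [hW']; positivity
  rw [← polar zero_le_one hR F, ← polar zero_le_one hR W']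
  have hWint : 0 ≤ ∫ x : Rd d, (Set.Ioc 1 R).indicator W' ‖x‖ := integral_nonneg hWn
  have hLp0 : 0 ≤ LpN p u := ENNReal.toReal_nonneg
  rw [← ENNReal.ofReal_le_ofReal_iff (by positivity), ofReal_integral_eq_lintegral_ofReal hFi (Eventually.of_forall hFn)]
  have hWm : Measurable W := by simp only [hW]; fun_prop
  have hm2 : AEMeasurable (fun x : Rd d => ENNReal.ofReal ((Set.Ioc 1 R).indicator W ‖x‖)) volume :=
    ((hWm.indicator measurableSet_Ioc).comp measurable_norm).ennreal_ofReal.aemeasurable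
  have hH := ENNReal.lintegral_mul_le_Lp_mul_Lq volume hconj (hm.1.enorm.pow_const 2) hm2
  calc ∫⁻ x : Rd d, ENNReal.ofReal ((Set.Ioc 1 R).indicator F ‖x‖)
      = ∫⁻ x : Rd d, ((fun x => ‖u x‖ₑ ^ 2) * fun x : Rd d => ENNReal.ofReal ((Set.Ioc 1 R).indicator W ‖x‖)) x := by
        congr 1; ext x
        simp only [Pi.mul_apply]
        rw [← ofReal_norm, ← ENNReal.ofReal_pow (norm_nonneg _), ← ENNReal.ofReal_mul (by positivity), hu x,
          Complex.norm_real, Real.norm_eq_abs, sq_abs]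
        congr 1
        by_cases hx : ‖x‖ ∈ Set.Ioc 1 R
        · simp only [Set.indicator_of_mem hx, hF, hW]
        · simp only [Set.indicator_of_notMem hx, mul_zero]
    _ ≤ _ := hH
    _ = ENNReal.ofReal (LpN p u ^ 2) * (ENNReal.ofReal (∫ x : Rd d, (Set.Ioc 1 R).indicator W' ‖x‖)) ^ (1 - 2/p) := by
        congr 1
        · rw [ENNReal.ofReal_pow hLp0, LpN, ENNReal.ofReal_toReal hm.2.ne,
            eLpNorm_eq_lintegral_rpow_enorm_toReal (by simp; linarith) ENNReal.ofReal_ne_top,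
            ENNReal.toReal_ofReal (by linarith), ← ENNReal.rpow_two, ← ENNReal.rpow_mul]
          congr 1
          · congr 1; ext x
            rw [← ENNReal.rpow_two, ← ENNReal.rpow_mul]
            congr 1; ring
          · field_simp
        · rw [ofReal_integral_eq_lintegral_ofReal hWi (Eventually.of_forall hWn)]
          congr 1
          · congr 1; ext x
            by_cases hx : ‖x‖ ∈ Set.Ioc 1 R
            · simp only [Set.indicator_of_mem hx, hW', hW]
              rw [ENNReal.ofReal_rpow_of_nonneg (by positivity) hq0.le, ← Real.rpow_mul (norm_nonneg _)]
              congr 2; ring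
            · simp only [Set.indicator_of_notMem hx, ENNReal.ofReal_zero, ENNReal.zero_rpow_of_pos hq0]
          · rw [hq]; field_simp
    _ = _ := by
        have h12 : 0 ≤ 1 - 2/p := by
          rw [sub_nonneg, div_le_one (by linarith)]; linarith
        rw [ENNReal.ofReal_rpow_of_nonneg hWint h12, ← ENNReal.ofReal_mul (by positivity)]

/-- Fourier side of the test function -/
def tU (d : ℕ) (δ : ℝ) : Rd d → ℂ := fun ξ => (((Set.Ioc (1-δ) (1+δ)).indicator (fun _ => (1:ℝ)) ‖ξ‖ : ℝ) : ℂ)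

def th (d : ℕ) [NeZero d] (δ ρ : ℝ) : ℝ := d * ∫ y in (1-δ)..(1+δ), y ^ (d-1) * Jb d (ρ * y)

lemma th_cont (d : ℕ) [NeZero d] (δ : ℝ) : Continuous (th d δ) := by
  unfold th
  refine continuous_const.mul ?_
  apply intervalIntegral.continuous_parametric_intervalIntegral_of_continuous'
  have := Jb_cont d
  unfold Function.uncurry
  fun_prop

lemma tU_meas (d : ℕ) (δ : ℝ) : Measurable (tU d δ) :=
  Complex.measurable_ofReal.comp ((measurable_const.indicator measurableSet_Ioc).comp measurable_norm)

lemma tU_norm (d : ℕ) (δ : ℝ) (ξ : Rd d) : ‖tU d δ ξ‖ = (Set.Ioc (1-δ) (1+δ)).indicator (fun _ => (1:ℝ)) ‖ξ‖ := by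
  unfold tU
  rw [Complex.norm_real, Real.norm_eq_abs, abs_of_nonneg]
  exact Set.indicator_apply_nonneg fun _ => zero_le_one

lemma tU_int (d : ℕ) (δ : ℝ) : Integrable (tU d δ) :=
  (polar_int (B := 1) measurable_const (fun y _ => by simp)).ofReal

lemma tU_sq_int (d : ℕ) (δ : ℝ) {f : ℝ → ℝ} {B : ℝ} (hf : Measurable f) (hB : ∀ y ∈ Set.Ioc (1-δ) (1+δ), |f y| ≤ B) :
    Integrable (fun ξ => ‖tU d δ ξ‖ ^ 2 * f ‖ξ‖) := by
  have := polar_int (d := d) hf hB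
  refine this.congr (Eventually.of_forall fun ξ => ?_)
  simp only [tU_norm]
  by_cases h : ‖ξ‖ ∈ Set.Ioc (1-δ) (1+δ) <;> simp [h]

lemma tU_l2 (d : ℕ) (δ : ℝ) : MemLp (tU d δ) 2 volume := by
  rw [memLp_two_iff_integrable_sq_norm (tU_meas d δ).aestronglyMeasurable]
  have := tU_sq_int d δ (f := fun _ => 1) (B := 1) measurable_const (fun y _ => by simp)
  simpa using this

lemma tu_rad (d : ℕ) (δ : ℝ) : Radial (𝓕⁻ (tU d δ)) := by
  apply inv_radial
  intro R
  exact Eventually.of_forall fun x => by simp [tU]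

lemma tu_eq (d : ℕ) [NeZero d] {δ : ℝ} (h0 : 0 ≤ δ) (h1 : δ ≤ 1/2) (x : Rd d) :
    𝓕⁻ (tU d δ) x = (th d δ ‖x‖ : ℝ) := by
  have hB := Bv_pos d
  have h := avg (tU_int d δ) (tu_rad d δ) x
  have e : ∫ ξ, ((Jb d (‖x‖*‖ξ‖):ℝ):ℂ) * tU d δ ξ = ((∫ ξ : Rd d, (Set.Ioc (1-δ) (1+δ)).indicator (fun y => Jb d (‖x‖ * y)) ‖ξ‖ : ℝ) : ℂ) := by
    rw [← integral_complex_ofReal]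
    congr 1; ext ξ
    unfold tU
    by_cases h : ‖ξ‖ ∈ Set.Ioc (1-δ) (1+δ) <;> simp [h]
  rw [e, polar (by linarith) (by linarith)] at h
  have hne : (Bv d : ℂ) ≠ 0 := by exact_mod_cast hB.ne'
  apply mul_left_cancel₀ hne
  rw [h, th]
  push_cast; ring

def tu (d : ℕ) (s δ : ℝ) : HsFn d s where
  toFun := 𝓕⁻ (tU d δ)
  ft := tU d δ
  memL2 := memLp_inv (tU_int d δ) (tU_l2 d δ)
  ft_memL2 := tU_l2 d δ
  isFT := isFT_inv (tU_int d δ)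
  memHs := by
    have hc : Continuous (fun y : ℝ => (1 + y ^ 2) ^ s) := by
      refine Continuous.rpow_const (by fun_prop) (fun y => Or.inl ?_)
      positivity
    obtain ⟨B, hB⟩ := (isCompact_Icc (a := 1-δ) (b := 1+δ)).exists_bound_of_continuousOn hc.continuousOn
    exact tU_sq_int d δ (f := fun y => (1 + y ^ 2) ^ s) (B := B) hc.measurable
      (fun y hy => hB y ⟨hy.1.le, hy.2⟩)

lemma tu_lp (d : ℕ) [NeZero d] {p δ : ℝ} (hp : 2 < p) : MemLp (𝓕⁻ (tU d δ)) (ENNReal.ofReal p) volume := by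
  have h2 := memLp_inv (tU_int d δ) (tU_l2 d δ)
  refine ⟨h2.1, ?_⟩
  refine (interp hp (fun x => inv_norm_le (tU d δ) x) (integral_nonneg fun _ => norm_nonneg _)
    (T := (eLpNorm (𝓕⁻ (tU d δ)) 2 volume).toReal) (by positivity)
    (by rw [ENNReal.ofReal_toReal h2.2.ne])).trans_lt ENNReal.ofReal_lt_top

lemma q_upper {d : ℕ} (hd : 2 ≤ d) {s γ c C : ℝ} (hγ : 1 < γ) (hC : 0 < C) :
    ∃ K, 0 < K ∧ ∀ (g : ℝ → ℝ → ℝ) (ε δ : ℝ), IsAdmissible s γ c C g → ε ∈ Set.Ioo (0:ℝ) 1 →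
      0 < δ → δ ≤ 1/2 → δ ^ γ ≤ ε → qeps (g ε) (tu d s δ) ≤ K * ε * δ := by
  have : NeZero d := ⟨by omega⟩
  have hB := Bv_pos d
  have hd0 : (0:ℝ) < d := by exact_mod_cast (by omega : 0 < d)
  refine ⟨d * Bv d * (3/2) ^ (d-1) * 2 * (2 * C), by positivity, ?_⟩
  intro g ε δ h hε hδ hδ2 hδε
  have hε0 := hε.1
  have hgb : ∀ y ∈ Set.Ioc (1-δ) (1+δ), g ε y ≤ 2 * C * ε := by
    intro y hy
    have hy1 : |y - 1| ≤ δ := by rw [abs_le]; constructor <;> linarith [hy.1, hy.2]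
    refine (h.2.2.2 ε hε y (hy1.trans hδ2)).2.trans ?_
    have : |y - 1| ^ γ ≤ δ ^ γ := by gcongr
    nlinarith
  have hgp := h.2.1 ε hε
  calc qeps (g ε) (tu d s δ) = ∫ ξ : Rd d, ‖tU d δ ξ‖ ^ 2 * g ε ‖ξ‖ := rfl
    _ ≤ ∫ ξ : Rd d, (Set.Ioc (1-δ) (1+δ)).indicator (fun _ => 2 * C * ε) ‖ξ‖ := by
        apply integral_mono
        · exact tU_sq_int d δ (h.1 ε hε) (B := 2 * C * ε) (fun y hy => by
            rw [abs_of_pos (hgp y)]; exact hgb y hy)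
        · exact polar_int (B := 2 * C * ε) measurable_const (fun y _ => by rw [abs_of_pos (by positivity)])
        · intro ξ
          simp only [tU_norm]
          by_cases hξ : ‖ξ‖ ∈ Set.Ioc (1-δ) (1+δ)
          · simp only [Set.indicator_of_mem hξ]; simpa using hgb _ hξ
          · simp [hξ]
    _ = d * Bv d * ∫ y in (1-δ)..(1+δ), y ^ (d-1) * (2 * C * ε) := polar (by linarith) (by linarith) _
    _ ≤ d * Bv d * ∫ y in (1-δ)..(1+δ), (3/2) ^ (d-1) * (2 * C * ε) := by
        gcongr
        apply intervalIntegral.integral_mono_on (by linarith)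
        · exact (by fun_prop : Continuous _).intervalIntegrable _ _
        · exact (by fun_prop : Continuous _).intervalIntegrable _ _
        · intro y hy
          have : 0 ≤ y := by linarith [hy.1]
          gcongr
          linarith [hy.2]
    _ = _ := by
        rw [intervalIntegral.integral_const, smul_eq_mul]; ring

lemma th_small {d : ℕ} [NeZero d] {δ ρ : ℝ} (hδ : 0 < δ) (hδ2 : δ ≤ 1/2) (hρ : 0 ≤ ρ) (hρ2 : ρ ≤ 1/(8*π)) :
    d * ((1/2) ^ (d-1) * (7/8 * Bv d) * 2) * δ ≤ th d δ ρ := by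
  have hB := Bv_pos d
  have hJ := Jb_cont d
  unfold th
  rw [mul_assoc]
  gcongr
  calc (1/2) ^ (d-1) * (7/8 * Bv d) * 2 * δ = ∫ y in (1-δ)..(1+δ), (1/2) ^ (d-1) * (7/8 * Bv d) := by
        rw [intervalIntegral.integral_const, smul_eq_mul]; ring
    _ ≤ _ := by
        apply intervalIntegral.integral_mono_on (by linarith)
        · exact (by fun_prop : Continuous _).intervalIntegrable _ _
        · exact (by fun_prop : Continuous _).intervalIntegrable _ _
        · intro y hy
          have hy0 : 1/2 ≤ y := by linarith [hy.1]
          have : 7/8 * Bv d ≤ Jb d (ρ * y) := by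
            apply Jb_ge
            rw [abs_of_nonneg (by positivity)]
            calc ρ * y ≤ 1/(8*π) * 2 := by
                  gcongr; linarith [hy.2]
              _ = 1/(4*π) := by field_simp; norm_num
          gcongr

lemma th_large {d : ℕ} [NeZero d] {M η δ ρ : ℝ}
    (hlip : ∀ x y, 1/10 ≤ x → 1/10 ≤ y → |wJ d x - wJ d y| ≤ M*|x-y|) (hM : 0 < M)
    (hδ : 0 < δ) (hδ2 : δ ≤ 1/2) (hρ : 1 ≤ ρ) (hη : M * (ρ * δ) ≤ η) :
    ((d:ℝ) * ((1/2) ^ ha d * (2 * δ))) ^ 2 ≤ ((d:ℝ) * ∫ y in (1-δ)..(1+δ), y ^ ha d) ^ 2 ∧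
    ((d:ℝ) * ∫ y in (1-δ)..(1+δ), y ^ ha d) ^ 2 * (wJ d ρ ^ 2 / 2 - η ^ 2) ≤ ρ ^ (d-1) * th d δ ρ ^ 2 := by
  have hd1 : 1 ≤ d := Nat.pos_of_ne_zero (NeZero.ne d)
  have ha0 : 0 ≤ ha d := by
    unfold ha
    have : (1:ℝ) ≤ d := by exact_mod_cast hd1
    linarith
  have hJ := Jb_cont d
  have hρ0 : 0 < ρ := by linarith
  have hca : Continuous (fun y : ℝ => y ^ ha d) := Real.continuous_rpow_const ha0
  have hcw : Continuous (wJ d) := by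
    unfold wJ; exact hca.mul hJ
  set Λ := ∫ y in (1-δ)..(1+δ), y ^ ha d with hΛ
  have hΛl : (1/2) ^ ha d * (2 * δ) ≤ Λ := by
    calc (1/2) ^ ha d * (2 * δ) = ∫ y in (1-δ)..(1+δ), (1/2:ℝ) ^ ha d := by
          rw [intervalIntegral.integral_const, smul_eq_mul]; ring
      _ ≤ _ := by
          apply intervalIntegral.integral_mono_on (by linarith)
          · exact (by fun_prop : Continuous _).intervalIntegrable _ _
          · exact hca.intervalIntegrable _ _
          · intro y hy
            gcongr
            linarith [hy.1]
  refine ⟨by gcongr, ?_⟩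
  have hΛ0 : 0 ≤ Λ := le_trans (by positivity) hΛl
  set X := ∫ y in (1-δ)..(1+δ), y ^ ha d * wJ d (ρ * y) with hX
  have e1 : th d δ ρ = d * (ρ ^ (-ha d) * X) := by
    unfold th
    rw [hX, ← intervalIntegral.integral_const_mul (ρ ^ (-ha d))]
    congr 1
    apply intervalIntegral.integral_congr
    intro y hy
    rw [Set.uIcc_of_le (by linarith)] at hy
    have hy0 : 0 < y := by linarith [hy.1]
    simp only [wJ]
    rw [Real.mul_rpow hρ0.le hy0.le]
    have a1 : y ^ (d-1) = y ^ ha d * y ^ ha d := by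
      rw [← Real.rpow_add hy0, ← Real.rpow_natCast, Nat.cast_sub hd1]
      congr 1; unfold ha; push_cast; ring
    have a2 : ρ ^ (-ha d) * ρ ^ ha d = 1 := by
      rw [← Real.rpow_add hρ0]; simp
    rw [a1]
    linear_combination (-(y ^ ha d * y ^ ha d * Jb d (ρ * y))) * a2
  have e2 : ρ ^ (d-1) * (ρ ^ (-ha d)) ^ 2 = 1 := by
    rw [← Real.rpow_natCast, ← Real.rpow_natCast, ← Real.rpow_mul hρ0.le, ← Real.rpow_add hρ0, Nat.cast_sub hd1]
    have : ((d:ℝ) - (1:ℕ) + -ha d * (2:ℕ)) = 0 := by unfold ha; push_cast; ring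
    rw [this, Real.rpow_zero]
  have e3 : ρ ^ (d-1) * th d δ ρ ^ 2 = d ^ 2 * X ^ 2 := by
    rw [e1]
    linear_combination (d ^ 2 * X ^ 2) * e2
  have hdiff : |X - Λ * wJ d ρ| ≤ Λ * η := by
    have i1 : IntervalIntegrable (fun y => y ^ ha d * wJ d (ρ * y)) volume (1-δ) (1+δ) :=
      (hca.mul (hcw.comp (by fun_prop))).intervalIntegrable _ _
    have i2 : IntervalIntegrable (fun y => y ^ ha d * wJ d ρ) volume (1-δ) (1+δ) :=
      (hca.mul continuous_const).intervalIntegrable _ _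
    rw [hX, hΛ, ← intervalIntegral.integral_mul_const, ← intervalIntegral.integral_sub i1 i2,
      ← intervalIntegral.integral_mul_const, ← Real.norm_eq_abs]
    apply intervalIntegral.norm_integral_le_of_norm_le (by linarith)
    · refine Eventually.of_forall fun y hy => ?_
      have hy0 : 1/2 ≤ y := by linarith [hy.1]
      have hyy : 0 < y := by linarith
      rw [← mul_sub, norm_mul, Real.norm_of_nonneg (by positivity), Real.norm_eq_abs]
      gcongr
      refine (hlip _ _ (by nlinarith) (by linarith)).trans (le_trans ?_ hη)
      gcongr
      have : ρ * y - ρ = ρ * (y - 1) := by ring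
      rw [this, abs_mul, abs_of_pos hρ0]
      gcongr
      rw [abs_le]; constructor <;> linarith [hy.1, hy.2]
    · exact (hca.mul continuous_const).intervalIntegrable _ _
  rw [e3, mul_pow, mul_assoc]
  gcongr
  have h5 : (X - Λ * wJ d ρ) ^ 2 ≤ (Λ * η) ^ 2 := by
    rw [← sq_abs]
    gcongr
  nlinarith [sq_nonneg (2 * X - Λ * wJ d ρ)]

lemma upper_int {d : ℕ} (hd : 2 ≤ d) [NeZero d] : ∃ k κ L0 : ℝ, 0 < k ∧ 0 < κ ∧ 0 < L0 ∧ ∀ δ R b : ℝ, 0 < δ → δ ≤ 1/2 →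
    1 ≤ R → R * δ ≤ κ → 0 ≤ b → L0 ≤ (∫ y in (1:ℝ)..R, y ^ (-b)) →
      k * δ ^ 2 * (∫ y in (1:ℝ)..R, y ^ (-b)) ≤ ∫ y in (1:ℝ)..R, y ^ (d-1) * (th d δ y ^ 2 * y ^ (-b)) := by
  obtain ⟨m, M, hm, hM, -, -, hlip, hLowInt⟩ := Jb_facts d hd
  have hd0 : (0:ℝ) < d := by exact_mod_cast (by omega : 0 < d)
  have ha0 : 0 ≤ ha d := by
    unfold ha
    have : (2:ℝ) ≤ d := by exact_mod_cast hd
    linarith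
  refine ⟨((d:ℝ) * ((1/2) ^ ha d * 2)) ^ 2 * (m/8), √(m/4) / M, 4 * M / m, by positivity, by positivity, by positivity, ?_⟩
  intro δ R b hδ hδ2 hR hRδ hb hL
  set L := ∫ y in (1:ℝ)..R, y ^ (-b) with hLdef
  set D := ((d:ℝ) * ∫ y in (1-δ)..(1+δ), y ^ ha d) ^ 2 with hD
  have hη2 : √(m/4) ^ 2 = m/4 := Real.sq_sqrt (by positivity)
  rw [le_div_iff₀ hM] at hRδ
  have hpt : ∀ y ∈ Set.Icc 1 R, _ := fun y hy =>
    th_large (d := d) (η := √(m/4)) hlip hM hδ hδ2 hy.1 (by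
      have : y * δ ≤ R * δ := by gcongr; exact hy.2
      nlinarith)
  have hDl := (hpt 1 ⟨le_rfl, hR⟩).1
  have hcont : ContinuousOn (fun y : ℝ => y ^ (-b)) (Set.uIcc 1 R) := by
    rw [Set.uIcc_of_le hR]
    intro y hy
    exact (Real.continuousAt_rpow_const _ _ (Or.inl (by linarith [hy.1]))).continuousWithinAt
  have hcw : Continuous (wJ d) := by
    unfold wJ; exact (Real.continuous_rpow_const ha0).mul (Jb_cont d)
  have hth := th_cont d δ
  have h1 : ∫ y in (1:ℝ)..R, D * (y ^ (-b) * wJ d y ^ 2 * (1/2) - m/4 * y ^ (-b)) ≤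
      ∫ y in (1:ℝ)..R, y ^ (d-1) * (th d δ y ^ 2 * y ^ (-b)) := by
    apply intervalIntegral.integral_mono_on hR
    · apply ContinuousOn.intervalIntegrable
      fun_prop
    · apply ContinuousOn.intervalIntegrable
      fun_prop
    · intro y hy
      have h2 := (hpt y hy).2
      have hy0 : 0 < y := by linarith [hy.1]
      have h3 : 0 ≤ y ^ (-b) := by positivity
      have h4 := mul_le_mul_of_nonneg_right h2 h3
      rw [hη2] at h4
      linarith
  refine le_trans ?_ h1
  have i1 : IntervalIntegrable (fun y => y ^ (-b) * wJ d y ^ 2 * (1/2)) volume 1 R := by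
    apply ContinuousOn.intervalIntegrable; fun_prop
  have i2 : IntervalIntegrable (fun y => m/4 * y ^ (-b)) volume 1 R := by
    apply ContinuousOn.intervalIntegrable; fun_prop
  rw [intervalIntegral.integral_const_mul, intervalIntegral.integral_sub i1 i2, intervalIntegral.integral_mul_const,
    intervalIntegral.integral_const_mul, ← hLdef]
  have h5 := hLowInt b R hb hR
  rw [← hLdef] at h5
  rw [div_le_iff₀ hm] at hL
  have hL0 : 0 ≤ L := by
    by_contra hneg
    push Not at hneg
    nlinarith
  have h6 : m/8 * L ≤ (∫ y in (1:ℝ)..R, y ^ (-b) * wJ d y ^ 2) * (1/2) - m/4 * L := by linarith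
  calc ((d:ℝ) * ((1/2) ^ ha d * 2)) ^ 2 * (m/8) * δ ^ 2 * L = ((d:ℝ) * ((1/2) ^ ha d * (2 * δ))) ^ 2 * (m/8 * L) := by ring
    _ ≤ D * (m/8 * L) := by gcongr
    _ ≤ _ := by gcongr

lemma main_gen {d : ℕ} (hd : 2 ≤ d) {s γ p c C : ℝ} (hs : 0 < s) (hγ : 1 < γ) (hp : 2 < p)
    (hps : s < (d : ℝ) / 2 → p < 2 * (d : ℝ) / ((d : ℝ) - 2 * s))
    (hc : 0 < c) (hC : 0 < C) (G : ℝ → ℝ) {A k κ R0 : ℝ} (hA : 0 < A) (hk : 0 < k) (hκ : 0 < κ)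
    (hR0 : 1 ≤ R0) (hG : ∀ R, R0 ≤ R → 0 < G R)
    (hlow : ∀ R, R0 ≤ R → Psi (bet d p) R ^ (2/p) ≤ A * G R)
    (hup : ∀ δ R, 0 < δ → δ ≤ 1/2 → R0 ≤ R → R * δ ≤ κ → k * δ ^ 2 * G R ≤ LpN p (𝓕⁻ (tU d δ)) ^ 2) :
    ∃ c' C' ε₀ : ℝ, 0 < c' ∧ c' ≤ C' ∧ 0 < ε₀ ∧ ε₀ < 1 ∧
      ∀ g : ℝ → ℝ → ℝ, IsAdmissible s γ c C g → ∀ ε : ℝ, 0 < ε → ε < ε₀ →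
        R0 ≤ ε ^ (-(1/γ)) ∧
        c' * (ε ^ (1 - 1/γ) / G (ε ^ (-(1/γ)))) ≤ Rayleigh d s p (g ε) Radial ∧
        Rayleigh d s p (g ε) Radial ≤ C' * (ε ^ (1 - 1/γ) / G (ε ^ (-(1/γ)))) := by
  have : NeZero d := ⟨by omega⟩
  obtain ⟨K, hK, hl⟩ := lower hd hs hγ hp hps hc hC
  obtain ⟨K2, hK2, hq⟩ := q_upper (s := s) (c := c) hd hγ hC
  have hγ0 : 0 < γ := by linarith
  set κ0 := min (1/2) κ with hκ0d
  have hκ0 : 0 < κ0 := by positivity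
  have hκ01 : κ0 ≤ 1/2 := min_le_left _ _
  have hκ02 : κ0 ≤ κ := min_le_right _ _
  have hR00 : 0 < R0 := by linarith
  refine ⟨1 / (K * A), max (1 / (K * A)) (K2 / (k * κ0)), min (1/2) (R0 ^ (-γ)), by positivity, le_max_left _ _,
    by positivity, (min_le_left _ _).trans_lt (by norm_num), ?_⟩
  intro g h ε hε0 hεε
  have hε1 : ε < 1 := hεε.trans_le ((min_le_left _ _).trans (by norm_num))
  have hε : ε ∈ Set.Ioo (0:ℝ) 1 := ⟨hε0, hε1⟩
  have hεR : ε < R0 ^ (-γ) := hεε.trans_le (min_le_right _ _)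
  have hR : R0 ≤ ε ^ (-(1/γ)) := by
    have h1 : (R0 ^ (-γ)) ^ (-(1/γ)) ≤ ε ^ (-(1/γ)) :=
      Real.rpow_le_rpow_of_nonpos hε0 hεR.le (by have : 0 < 1/γ := by positivity
                                                 linarith)
    rwa [← Real.rpow_mul hR00.le, show -γ * (-(1/γ)) = 1 by field_simp, Real.rpow_one] at h1
  refine ⟨hR, ?_⟩
  set R := ε ^ (-(1/γ)) with hRd
  have hGR := hG R hR
  set δ := κ0 * ε ^ (1/γ) with hδd
  have he1 : ε ^ (1/γ) ≤ 1 := Real.rpow_le_one hε0.le hε1.le (by positivity)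
  have he0 : 0 < ε ^ (1/γ) := by positivity
  have hδ : 0 < δ := by positivity
  have hδ2 : δ ≤ 1/2 := by nlinarith
  have hδγ : δ ^ γ ≤ ε := by
    rw [hδd, Real.mul_rpow hκ0.le he0.le, ← Real.rpow_mul hε0.le, one_div_mul_cancel hγ0.ne', Real.rpow_one]
    have : κ0 ^ γ ≤ 1 := Real.rpow_le_one hκ0.le (by linarith) hγ0.le
    nlinarith
  have hRδ : R * δ ≤ κ := by
    have : R * δ = κ0 := by
      rw [hRd, hδd, Real.rpow_neg hε0.le]; field_simp
    linarith
  have hLp := hup δ R hδ hδ2 hR hRδ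
  have hLp0 : 0 < LpN p (𝓕⁻ (tU d δ)) ^ 2 := lt_of_lt_of_le (by positivity) hLp
  have hmem : qeps (g ε) (tu d s δ) / LpN p (𝓕⁻ (tU d δ)) ^ 2 ∈ RayleighSet d s p (g ε) Radial := by
    refine ⟨tu d s δ, tu_rad d δ, ?_, tu_lp d hp, rfl⟩
    intro h0
    have : LpN p (𝓕⁻ (tU d δ)) = 0 := by
      unfold LpN
      have h1 := eLpNorm_congr_ae (p := ENNReal.ofReal p) h0
      change eLpNorm (𝓕⁻ (tU d δ)) _ _ = _ at h1
      rw [h1]; simp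
    rw [this] at hLp0; simp at hLp0
  have hE : 0 < ε ^ (1 - 1/γ) := by positivity
  constructor
  · refine le_csInf ⟨_, hmem⟩ ?_
    intro t ht
    have h1 := hl g ε h hε t ht
    have h2 := hlow R hR
    have hPsi : 0 < Psi (bet d p) R ^ (2/p) :=
      Real.rpow_pos_of_pos (lt_of_lt_of_le one_pos (Psi_ge_one _ (hR0.trans hR))) _
    have he : ε ^ (1/γ - 1) = (ε ^ (1 - 1/γ))⁻¹ := by rw [← Real.rpow_neg hε0.le]; congr 1; ring
    rw [he] at h1
    have ht0 : 0 < t := by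
      by_contra hcon
      have : K * t * ((ε ^ (1 - 1/γ))⁻¹ * Psi (bet d p) R ^ (2/p)) ≤ 0 :=
        mul_nonpos_of_nonpos_of_nonneg (by nlinarith) (by positivity)
      linarith
    have h3 : 1 ≤ K * t * ((ε ^ (1 - 1/γ))⁻¹ * (A * G R)) := h1.trans (by gcongr)
    rw [div_mul_div_comm, one_mul, div_le_iff₀ (by positivity)]
    have h4 : K * t * ((ε ^ (1 - 1/γ))⁻¹ * (A * G R)) = t * (K * A * G R) / ε ^ (1 - 1/γ) := by field_simp
    rw [h4, one_le_div hE] at h3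
    exact h3
  · have hb : BddBelow (RayleighSet d s p (g ε) Radial) := by
      refine ⟨0, ?_⟩
      rintro t ⟨u, -, -, -, rfl⟩
      have := q_nonneg h hε u
      positivity
    have h1 := csInf_le hb hmem
    refine h1.trans ?_
    have h2 := hq g ε δ h hε hδ hδ2 hδγ
    calc qeps (g ε) (tu d s δ) / LpN p (𝓕⁻ (tU d δ)) ^ 2 ≤ K2 * ε * δ / (k * δ ^ 2 * G R) := by
          gcongr
      _ = K2 / (k * κ0) * (ε ^ (1 - 1/γ) / G R) := by
          rw [Real.rpow_sub hε0, Real.rpow_one, hδd]; field_simp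
      _ ≤ _ := by
          gcongr
          exact le_max_right _ _

lemma case_gt_up {d : ℕ} (hd : 2 ≤ d) {p : ℝ} (hp : 2 < p) : ∃ k, 0 < k ∧ ∀ δ, 0 < δ → δ ≤ 1/2 →
    k * δ ^ 2 ≤ LpN p (𝓕⁻ (tU d δ)) ^ 2 := by
  have : NeZero d := ⟨by omega⟩
  have hB := Bv_pos d
  have hd0 : (0:ℝ) < d := by exact_mod_cast (by omega : 0 < d)
  set r : ℝ := 1/(8*π) with hr
  have hr0 : 0 < r := by positivity
  set B := Metric.closedBall (0 : Rd d) r with hBd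
  set m := d * ((1/2) ^ (d-1) * (7/8 * Bv d) * 2) with hm
  have hm0 : 0 < m := by positivity
  have hv0 : volume B ≠ 0 := (Metric.measure_closedBall_pos volume _ hr0).ne'
  have hv1 : volume B ≠ ⊤ := measure_closedBall_lt_top.ne
  set v := (volume B ^ (1/p)).toReal with hv
  have hvt : volume B ^ (1/p) ≠ ⊤ := ENNReal.rpow_ne_top_of_nonneg (by positivity) hv1
  have hvp : 0 < v := ENNReal.toReal_pos (by
    rw [Ne, ENNReal.rpow_eq_zero_iff]; push Not
    exact ⟨fun h => absurd h hv0, fun h => absurd h hv1⟩) hvt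
  refine ⟨(m * v) ^ 2, by positivity, ?_⟩
  intro δ hδ hδ2
  have h1 : eLpNorm (B.indicator fun _ => (m * δ : ℝ)) (ENNReal.ofReal p) volume ≤ eLpNorm (𝓕⁻ (tU d δ)) (ENNReal.ofReal p) volume := by
    apply eLpNorm_mono
    intro x
    by_cases hx : x ∈ B
    · rw [Set.indicator_of_mem hx, tu_eq d hδ.le hδ2]
      have h2 := th_small (d := d) hδ hδ2 (norm_nonneg x) (by rw [← hr]; simpa [hBd] using hx)
      rw [Complex.norm_real, Real.norm_of_nonneg (by positivity)]
      exact h2.trans (le_abs_self _)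
    · rw [Set.indicator_of_notMem hx]; simp
  rw [eLpNorm_indicator_const measurableSet_closedBall (by simp; linarith) (by simp)] at h1
  rw [ENNReal.toReal_ofReal (by linarith)] at h1
  have h3 := ENNReal.toReal_mono (tu_lp d hp).2.ne h1
  rw [ENNReal.toReal_mul, toReal_enorm, Real.norm_of_nonneg (by positivity)] at h3
  rw [← mul_pow]
  unfold LpN
  refine pow_le_pow_left₀ (by positivity) ?_ 2
  calc m * v * δ = m * δ * v := by ring
    _ ≤ _ := h3

lemma case_lt_up {d : ℕ} (hd : 2 ≤ d) {p : ℝ} (hp : 2 < p) : ∃ k κ R0, 0 < k ∧ 0 < κ ∧ 1 ≤ R0 ∧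
    ∀ δ R, 0 < δ → δ ≤ 1/2 → R0 ≤ R → R * δ ≤ κ →
    k * δ ^ 2 * R ^ (1 - 2 * (d:ℝ) * (1/2 - 1/p)) ≤ LpN p (𝓕⁻ (tU d δ)) ^ 2 := by
  have : NeZero d := ⟨by omega⟩
  have hB := Bv_pos d
  have hd0 : (0:ℝ) < d := by exact_mod_cast (by omega : 0 < d)
  obtain ⟨k, κ, L0, hk, hκ, hL0, hU⟩ := upper_int (d := d) hd
  set e := 1 - 2/p with he
  have he0 : 0 < e := by rw [he, sub_pos, div_lt_one (by linarith)]; exact hp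
  refine ⟨d * Bv d * (k / 2) / (Bv d) ^ e, κ, L0 + 2, by positivity, hκ, by linarith, ?_⟩
  intro δ R hδ hδ2 hR hRδ
  have hR1 : 1 ≤ R := by linarith
  have hR0 : 0 < R := by linarith
  have h1 := hU δ R 0 hδ hδ2 hR1 hRδ le_rfl (by simp; linarith)
  have h2 := holder_rad hd hp le_rfl hR1 (th_cont d δ) (tu_eq d hδ.le hδ2) (tu_lp d hp)
  have hi : ∫ y in (1:ℝ)..R, y ^ (-(0:ℝ)) = R - 1 := by simp
  have hj : ∫ y in (1:ℝ)..R, y ^ (d-1) * y ^ (-((0:ℝ) * (p / (p-2)))) = (R ^ d - 1) / d := by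
    simp only [zero_mul, neg_zero, Real.rpow_zero, mul_one, integral_pow, one_pow]
    have : d - 1 + 1 = d := by omega
    have h5 : ((d - 1 : ℕ) : ℝ) + 1 = d := by exact_mod_cast this
    rw [this, h5]
  rw [hi] at h1
  rw [hj] at h2
  have hRd1 : 1 ≤ R ^ d := one_le_pow₀ hR1
  have h3 : (d * Bv d * ((R ^ d - 1) / d)) ^ e ≤ (Bv d) ^ e * R ^ (d * e) := by
    rw [Real.rpow_mul hR0.le, Real.rpow_natCast, ← Real.mul_rpow hB.le (by positivity)]
    refine Real.rpow_le_rpow ?_ ?_ he0.le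
    · have : 0 ≤ R ^ d - 1 := by linarith
      positivity
    · have : d * Bv d * ((R ^ d - 1) / d) = Bv d * (R ^ d - 1) := by field_simp
      rw [this]; nlinarith
  have h4 : d * Bv d * (k * δ ^ 2 * (R/2)) ≤ LpN p (𝓕⁻ (tU d δ)) ^ 2 * ((Bv d) ^ e * R ^ (d * e)) := by
    calc d * Bv d * (k * δ ^ 2 * (R/2)) ≤ d * Bv d * (k * δ ^ 2 * (R - 1)) := by gcongr; linarith
      _ ≤ _ := by gcongr
      _ ≤ _ := h2
      _ ≤ _ := by gcongr
  have h6 : R ^ (1 - 2 * (d:ℝ) * (1/2 - 1/p)) = R / R ^ (d * e) := by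
    rw [show 1 - 2 * (d:ℝ) * (1/2 - 1/p) = 1 - d * e by rw [he]; ring, Real.rpow_sub hR0, Real.rpow_one]
  rw [h6]
  rw [← div_le_iff₀ (by positivity)] at h4
  refine le_trans (le_of_eq ?_) h4
  field_simp

lemma case_eq_up {d : ℕ} (hd : 2 ≤ d) {p : ℝ} (hp : 2 < p) (hpe : p = 2 * (d:ℝ) / ((d:ℝ) - 1)) :
    ∃ k κ R0, 0 < k ∧ 0 < κ ∧ exp 1 ≤ R0 ∧
    ∀ δ R, 0 < δ → δ ≤ 1/2 → R0 ≤ R → R * δ ≤ κ →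
    k * δ ^ 2 * (Real.log R) ^ (2/p) ≤ LpN p (𝓕⁻ (tU d δ)) ^ 2 := by
  have : NeZero d := ⟨by omega⟩
  have hB := Bv_pos d
  have hd2 : (2:ℝ) ≤ d := by exact_mod_cast hd
  have hd0 : (0:ℝ) < d := by linarith
  have hd1 : (d:ℝ) - 1 ≠ 0 := by linarith
  obtain ⟨k, κ, L0, hk, hκ, hL0, hU⟩ := upper_int (d := d) hd
  set e := 1 - 2/p with he
  have he0 : 0 < e := by rw [he, sub_pos, div_lt_one (by linarith)]; exact hp
  refine ⟨d * Bv d * k / (d * Bv d) ^ e, κ, exp (L0 + 1), by positivity, hκ, by gcongr; linarith, ?_⟩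
  intro δ R hδ hδ2 hR hRδ
  have hR1 : 1 ≤ R := (Real.one_le_exp (by linarith)).trans hR
  have hR0 : 0 < R := by linarith
  have hlog : L0 + 1 ≤ Real.log R := by rwa [Real.le_log_iff_exp_le hR0]
  have hlog0 : 0 < Real.log R := by linarith
  have hnot : (0:ℝ) ∉ Set.uIcc 1 R := by
    rw [Set.uIcc_of_le hR1]; intro h; linarith [h.1]
  have hi : ∫ y in (1:ℝ)..R, y ^ (-(1:ℝ)) = Real.log R := by
    simp only [Real.rpow_neg_one]
    rw [integral_inv hnot, div_one]
  have hpp : p / (p - 2) = d := by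
    have : p - 2 ≠ 0 := by linarith
    rw [div_eq_iff this, hpe]; field_simp; ring
  have hj : ∫ y in (1:ℝ)..R, y ^ (d-1) * y ^ (-((1:ℝ) * (p / (p-2)))) = Real.log R := by
    rw [← hi]
    apply intervalIntegral.integral_congr
    intro y hy
    rw [Set.uIcc_of_le hR1] at hy
    have hy0 : 0 < y := by linarith [hy.1]
    simp only
    rw [hpp, one_mul, ← Real.rpow_natCast, ← Real.rpow_add hy0, Nat.cast_sub (by omega), Nat.cast_one]
    congr 1; ring
  have h1 := hU δ R 1 hδ hδ2 hR1 hRδ zero_le_one (by rw [hi]; linarith)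
  have h2 := holder_rad hd hp zero_le_one hR1 (th_cont d δ) (tu_eq d hδ.le hδ2) (tu_lp d hp)
  rw [hi] at h1
  rw [hj] at h2
  have h4 : d * Bv d * (k * δ ^ 2 * Real.log R) ≤ LpN p (𝓕⁻ (tU d δ)) ^ 2 * ((d * Bv d) ^ e * Real.log R ^ e) := by
    rw [← Real.mul_rpow (by positivity) hlog0.le]
    exact le_trans (by gcongr) h2
  have h6 : Real.log R ^ (2/p) = Real.log R / Real.log R ^ e := by
    rw [show 2/p = 1 - e by rw [he]; ring, Real.rpow_sub hlog0, Real.rpow_one]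
  rw [h6]
  rw [← div_le_iff₀ (by positivity)] at h4
  refine le_trans (le_of_eq ?_) h4
  field_simp

lemma bet_one (d : ℕ) (p : ℝ) : bet d p + 1 = d - (d - 1) * p / 2 := by
  unfold bet ha; ring

lemma Psi_eval {β R : ℝ} (hR : 1 ≤ R) (hb : β + 1 ≠ 0) :
    Psi β R = 1 + (R ^ (β+1) - 1) / (β+1) + R ^ (β+1) := by
  unfold Psi
  rw [integral_rpow, Real.one_rpow]
  right
  refine ⟨fun h => hb (by rw [h]; ring), ?_⟩
  rw [Set.uIcc_of_le hR]; intro h; linarith [h.1]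

lemma Psi_neg {β R : ℝ} (hR : 1 ≤ R) (hb : β + 1 < 0) : Psi β R ≤ 2 + 1 / (-(β+1)) := by
  rw [Psi_eval hR hb.ne]
  have h1 : R ^ (β+1) ≤ 1 := Real.rpow_le_one_of_one_le_of_nonpos hR hb.le
  have h0 : 0 ≤ R ^ (β+1) := Real.rpow_nonneg (by linarith) _
  have : (R ^ (β+1) - 1) / (β+1) = (1 - R ^ (β+1)) / (-(β+1)) := by
    rw [div_neg, ← neg_div]; congr 1; ring
  rw [this]
  have : (1 - R ^ (β+1)) / (-(β+1)) ≤ 1 / (-(β+1)) := by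
    have : 0 < -(β+1) := by linarith
    gcongr; linarith
  linarith

lemma Psi_pos {β R : ℝ} (hR : 1 ≤ R) (hb : 0 < β + 1) : Psi β R ≤ (2 + 1 / (β+1)) * R ^ (β+1) := by
  rw [Psi_eval hR hb.ne']
  have h1 : 1 ≤ R ^ (β+1) := Real.one_le_rpow hR hb.le
  have : (R ^ (β+1) - 1) / (β+1) ≤ R ^ (β+1) / (β+1) := by gcongr; linarith
  have e : (2 + 1 / (β+1)) * R ^ (β+1) = 2 * R ^ (β+1) + R ^ (β+1) / (β+1) := by ring
  rw [e]; linarith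

lemma Psi_zero {R : ℝ} (hR : exp 1 ≤ R) : Psi (-1) R ≤ 3 * Real.log R := by
  have hR1 : 1 ≤ R := (Real.one_le_exp zero_le_one).trans hR
  have hlog : 1 ≤ Real.log R := by rwa [Real.le_log_iff_exp_le (by linarith)]
  unfold Psi
  have hnot : (0:ℝ) ∉ Set.uIcc 1 R := by
    rw [Set.uIcc_of_le hR1]; intro h; linarith [h.1]
  have hi : ∫ y in (1:ℝ)..R, y ^ (-(1:ℝ)) = Real.log R := by
    simp only [Real.rpow_neg_one]
    rw [integral_inv hnot, div_one]
  rw [hi]; norm_num; linarith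

/-- Theorem 1.3, radial case: `R^rad_ε(p) ≅ ε^{1-min(1,α_rad)/γ}` if
`p ≠ 2d/(d-1)`, and `R^rad_ε(p) ≅ ε^{1-1/γ} |log ε|^{(1-d)/d}` if `p = 2d/(d-1)`. -/
theorem stmt3 (d : ℕ) (hd : 2 ≤ d) (s γ p c C : ℝ)
    (hs : (d : ℝ) / ((d : ℝ) + 1) < s) (hγ : 1 < γ)
    (hp : 2 < p) (hps : s < (d : ℝ) / 2 → p < 2 * (d : ℝ) / ((d : ℝ) - 2 * s))
    (hc : 0 < c) (hcC : c ≤ C) :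
    ∃ c' C' ε₀ : ℝ, 0 < c' ∧ c' ≤ C' ∧ 0 < ε₀ ∧ ε₀ < 1 ∧
      ∀ g : ℝ → ℝ → ℝ, IsAdmissible s γ c C g →
        ∀ ε : ℝ, 0 < ε → ε < ε₀ →
          (p ≠ 2 * (d : ℝ) / ((d : ℝ) - 1) →
            c' * ε ^ (1 - min 1 (2 * (d : ℝ) * (1/2 - 1/p)) / γ)
                ≤ Rayleigh d s p (g ε) Radial ∧
              Rayleigh d s p (g ε) Radial
                ≤ C' * ε ^ (1 - min 1 (2 * (d : ℝ) * (1/2 - 1/p)) / γ)) ∧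
          (p = 2 * (d : ℝ) / ((d : ℝ) - 1) →
            c' * ε ^ (1 - 1/γ) * |Real.log ε| ^ ((1 - (d : ℝ)) / (d : ℝ))
                ≤ Rayleigh d s p (g ε) Radial ∧
              Rayleigh d s p (g ε) Radial
                ≤ C' * ε ^ (1 - 1/γ) * |Real.log ε| ^ ((1 - (d : ℝ)) / (d : ℝ))) := by
  have hd2 : (2:ℝ) ≤ d := by exact_mod_cast hd
  have hd0 : (0:ℝ) < d := by linarith
  have hd1 : 0 < (d:ℝ) - 1 := by linarith
  have hs0 : 0 < s := lt_trans (by positivity) hs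
  have hC : 0 < C := by linarith
  have hp0 : 0 < p := by linarith
  have hγ0 : 0 < γ := by linarith
  rcases lt_trichotomy p (2 * (d:ℝ) / ((d:ℝ) - 1)) with hlt | heq | hgt
  · have hlt' := (lt_div_iff₀ hd1).mp hlt
    have hb : 0 < bet d p + 1 := by rw [bet_one]; linarith
    obtain ⟨k, κ, R0, hk, hκ, hR0, hup⟩ := case_lt_up hd hp
    have hmin : min 1 (2 * (d:ℝ) * (1/2 - 1/p)) = 2 * (d:ℝ) * (1/2 - 1/p) := by
      apply min_eq_right
      rw [show 2 * (d:ℝ) * (1/2 - 1/p) = d * (p - 2) / p by field_simp, div_le_one hp0]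
      linarith
    obtain ⟨c', C', ε₀, h1, h2, h3, h4, h5⟩ := main_gen hd hs0 hγ hp hps hc hC
      (fun R => R ^ (1 - 2 * (d:ℝ) * (1/2 - 1/p))) (A := (2 + 1 / (bet d p + 1)) ^ (2/p)) (by positivity) hk hκ hR0
      (fun R hR => Real.rpow_pos_of_pos (by linarith) _)
      (fun R hR => by
        have hR1 : 1 ≤ R := by linarith
        have hR' : 0 ≤ R := by linarith
        have h6 := Real.rpow_le_rpow (by linarith [Psi_ge_one (bet d p) hR1]) (Psi_pos hR1 hb)
          (show 0 ≤ 2/p by positivity)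
        rw [Real.mul_rpow (by positivity) (by positivity), ← Real.rpow_mul hR'] at h6
        refine h6.trans (le_of_eq ?_)
        congr 2; rw [bet_one]; field_simp; ring) hup
    refine ⟨c', C', ε₀, h1, h2, h3, h4, fun g hg ε hε hεε => ⟨fun _ => ?_, fun h => absurd h hlt.ne⟩⟩
    obtain ⟨-, h7, h8⟩ := h5 g hg ε hε hεε
    have : ε ^ (1 - 1/γ) / (ε ^ (-(1/γ))) ^ (1 - 2 * (d:ℝ) * (1/2 - 1/p)) =
        ε ^ (1 - min 1 (2 * (d:ℝ) * (1/2 - 1/p)) / γ) := by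
      rw [hmin, ← Real.rpow_mul hε.le, ← Real.rpow_sub hε]; congr 1; field_simp; ring
    simp only [this] at h7 h8
    exact ⟨h7, h8⟩
  · have hpe : p * (d - 1) = 2 * d := by rw [heq]; field_simp
    have hb : bet d p = -1 := by
      have := bet_one d p
      linarith
    obtain ⟨k, κ, R0, hk, hκ, hR0, hup⟩ := case_eq_up hd hp heq
    have hR01 : 1 ≤ R0 := (Real.one_le_exp zero_le_one).trans hR0
    have hlg : ∀ R, R0 ≤ R → 0 < Real.log R := fun R hR =>
      Real.log_pos (by linarith [Real.add_one_le_exp (1:ℝ)])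
    obtain ⟨c', C', ε₀, h1, h2, h3, h4, h5⟩ := main_gen hd hs0 hγ hp hps hc hC
      (fun R => Real.log R ^ (2/p)) (A := 3 ^ (2/p)) (by positivity) hk hκ hR01
      (fun R hR => Real.rpow_pos_of_pos (hlg R hR) _)
      (fun R hR => by
        have hR1 : 1 ≤ R := by linarith
        have := hlg R hR
        have h6 := Real.rpow_le_rpow (by linarith [Psi_ge_one (-1) hR1]) (Psi_zero (hR0.trans hR))
          (show 0 ≤ 2/p by positivity)
        rw [Real.mul_rpow (by positivity) (by positivity)] at h6
        rw [hb]; exact h6) hup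
    have hγp : 0 < γ ^ (2/p) := by positivity
    refine ⟨c' * γ ^ (2/p), C' * γ ^ (2/p), ε₀, by positivity, by gcongr, h3, h4,
      fun g hg ε hε hεε => ⟨fun h => absurd heq h, fun _ => ?_⟩⟩
    obtain ⟨h6, h7, h8⟩ := h5 g hg ε hε hεε
    have hl0 : 0 < |Real.log ε| := by
      have := Real.log_neg hε (by linarith)
      exact abs_pos.mpr this.ne
    have hl : Real.log (ε ^ (-(1/γ))) = |Real.log ε| / γ := by
      rw [Real.log_rpow hε, abs_of_neg (Real.log_neg hε (by linarith))]; ring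
    have e2 : (1 - (d:ℝ)) / d = -(2/p) := by
      have : p = 2 * d / (d - 1) := heq
      rw [this]; field_simp; ring
    have : ∀ x : ℝ, x * (ε ^ (1 - 1/γ) / (Real.log (ε ^ (-(1/γ)))) ^ (2/p)) =
        x * γ ^ (2/p) * ε ^ (1 - 1/γ) * |Real.log ε| ^ ((1 - (d : ℝ)) / (d : ℝ)) := by
      intro x
      rw [hl, Real.div_rpow hl0.le hγ0.le, e2, Real.rpow_neg hl0.le]; field_simp
    simp only [this] at h7 h8
    exact ⟨h7, h8⟩
  · have hgt' := (div_lt_iff₀ hd1).mp hgt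
    have hb : bet d p + 1 < 0 := by rw [bet_one]; linarith
    have hb' : 0 < -(bet d p + 1) := by linarith
    obtain ⟨k, hk, hup⟩ := case_gt_up hd hp
    have hmin : min 1 (2 * (d:ℝ) * (1/2 - 1/p)) = 1 := by
      apply min_eq_left
      rw [show 2 * (d:ℝ) * (1/2 - 1/p) = d * (p - 2) / p by field_simp, one_le_div hp0]
      linarith
    obtain ⟨c', C', ε₀, h1, h2, h3, h4, h5⟩ := main_gen hd hs0 hγ hp hps hc hC
      (fun _ => 1) (A := (2 + 1 / (-(bet d p + 1))) ^ (2/p)) (κ := 1) (R0 := 1) (by positivity) hk one_pos le_rfl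
      (fun R hR => one_pos)
      (fun R hR => by
        rw [mul_one]
        exact Real.rpow_le_rpow (by linarith [Psi_ge_one (bet d p) hR]) (Psi_neg hR hb) (by positivity))
      (fun δ R hδ hδ2 _ _ => by rw [mul_one]; exact hup δ hδ hδ2)
    refine ⟨c', C', ε₀, h1, h2, h3, h4, fun g hg ε hε hεε => ⟨fun _ => ?_, fun h => absurd h hgt.ne'⟩⟩
    obtain ⟨-, h7, h8⟩ := h5 g hg ε hε hεε
    rw [hmin]
    simp only [div_one] at h7 h8
    exact ⟨h7, h8⟩
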